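/- arXiv:1310.2777 — 2 statements merged into one kernel-verified Lean document; each statement's English description precedes it below -/
import Mathlib

section
/- Let F : D^b(A) → D^b(B) be a derived equivalence given by tensoring with a two-sided tilting complex T•. Then there exists a constant N₁ ∈ ℕ (namely N₁ = 2^{d(B, F(A))}) such that hl(F(X•)) ≤ N₁ · hl(X•) for all bounded complexes X• ∈ D^b(A). -/
/-!
STATEMENT 3: If `F : D^b(A) → D^b(B)` is a derived equivalence (given by tensoring
with a two-sided tilting complex, i.e. a triangulated equivalence), then there is a
constant `N₁ ∈ ℕ` such that `hl(F(X)) ≤ N₁ · hl(X)` for all bounded complexes `X`.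
-/

open CategoryTheory Limits

universe u
variable (k : Type u) [Field k] [IsAlgClosed k]

section Defs

variable (R : Type u) [Ring R] [Algebra k R] [FiniteDimensional k R]
  [HasDerivedCategory.{u} (ModuleCat.{u} R)]

/-- The `i`-th cohomology of an object of the derived category. -/
noncomputable def Hobj (i : ℤ) (X : DerivedCategory (ModuleCat.{u} R)) : ModuleCat R :=
  (DerivedCategory.homologyFunctor (ModuleCat R) i).obj X

/-- `dim_k H^i(X)`. -/
noncomputable def hdim (i : ℤ) (X : DerivedCategory (ModuleCat.{u} R)) : ℕ :=
  Module.finrank k ((ModuleCat.restrictScalars (algebraMap k R)).obj (Hobj R i X))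

/-- The cohomological length `hl(X) = max_i dim_k H^i(X)`. -/
noncomputable def hl (X : DerivedCategory (ModuleCat.{u} R)) : ℕ :=
  sSup (Set.range fun i : ℤ => hdim k R i X)

/-- The cohomological width `hw(X) = max { j - i + 1 | H^i(X) ≠ 0 ≠ H^j(X) }`. -/
noncomputable def hw (X : DerivedCategory (ModuleCat.{u} R)) : ℕ :=
  sSup {n : ℕ | ∃ i j : ℤ, ¬ IsZero (Hobj R i X) ∧ ¬ IsZero (Hobj R j X) ∧ (n : ℤ) = j - i + 1}

/-- The cohomological range `hr(X) = hw(X) · hl(X)`. -/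
noncomputable def hr (X : DerivedCategory (ModuleCat.{u} R)) : ℕ := hw R X * hl k R X

/-- An object of an additive category is indecomposable iff it is nonzero and its only
idempotent endomorphisms are `0` and the identity. -/
def Indec {D : Type*} [Category D] [Limits.HasZeroMorphisms D] (X : D) : Prop :=
  ¬ IsZero X ∧ ∀ e : X ⟶ X, e ≫ e = e → e = 0 ∨ e = 𝟙 X

/-- `X` has bounded cohomology, i.e. `X` lies in `D^b`. -/
def Bdd (X : DerivedCategory (ModuleCat.{u} R)) : Prop :=
  ∃ a b : ℤ, ∀ i : ℤ, (i < a ∨ b < i) → IsZero (Hobj R i X)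

/-- All cohomologies of `X` are finite dimensional over `k`, i.e. `X` lies in the
bounded derived category of finite-dimensional modules. -/
def FinCoh (X : DerivedCategory (ModuleCat.{u} R)) : Prop :=
  ∀ i : ℤ, FiniteDimensional k
    ((ModuleCat.restrictScalars (algebraMap k R)).obj (Hobj R i X))

/-- Objects of `D^b(mod R)` (bounded, finite-dimensional cohomology). -/
def InDb (X : DerivedCategory (ModuleCat.{u} R)) : Prop := Bdd R X ∧ FinCoh k R X

/-- The global cohomological length `gl.hl R`, as a value in `ℕ∞`. -/
noncomputable def glhl : ℕ∞ :=
  ⨆ X : {X : DerivedCategory (ModuleCat.{u} R) // Indec X ∧ InDb k R X}, (hl k R X.1 : ℕ∞)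

/-- The global cohomological width `gl.hw R`, as a value in `ℕ∞`. -/
noncomputable def glhw : ℕ∞ :=
  ⨆ X : {X : DerivedCategory (ModuleCat.{u} R) // Indec X ∧ InDb k R X}, (hw R X.1 : ℕ∞)

/-- The global cohomological range `gl.hr R`, as a value in `ℕ∞`. -/
noncomputable def glhr : ℕ∞ :=
  ⨆ X : {X : DerivedCategory (ModuleCat.{u} R) // Indec X ∧ InDb k R X}, (hr k R X.1 : ℕ∞)

/-- `R` is strongly derived unbounded: there is an infinite strictly increasing sequence
`(rᵢ)` such that for each `i` there are infinitely many indecomposable objects of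
`D^b(mod R)` of cohomological range `rᵢ`, pairwise distinct up to shift and isomorphism. -/
def StronglyDerivedUnbounded : Prop :=
  ∃ r : ℕ → ℕ, StrictMono r ∧ ∀ i : ℕ, ∃ X : ℕ → DerivedCategory (ModuleCat.{u} R),
    (∀ j : ℕ, Indec (X j) ∧ InDb k R (X j) ∧ hr k R (X j) = r i) ∧
    (∀ j j' : ℕ, j ≠ j' → ∀ n : ℤ, IsEmpty (X j ≅ (X j')⟦n⟧))

end Defs

/-!
Let `S` be a family of compact objects detecting isomorphisms in a triangulated category `D` with
coproducts. Iterating the cone of the universal map `∐ S i ⟶ G` yields a tower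
`T = G 0 ⟶ G 1 ⟶ ⋯` whose transition maps are ghosts, that is, kill all morphisms from objects of
`S`. Hence the homotopy colimit of the tower vanishes and, if `T` is compact, some composite
`T ⟶ G n` is already zero. Working backwards through the tower, each step replaces `T` by the
fibre of a map to a finite sum of objects of `S` and costs only finitely many spaces
`Hom(S i, X)`, which gives the Geiss–Krause bound `dim Hom(T, X) ≤ N · sup_i dim Hom(S i, X)`.

Apply this in `D(A)` to `S i = A[i]` and to a preimage `T` of `B` under `F`. Then
`Hom(A[i], X) ≅ H^{-i}(X)`, while the bijection `Hom(T, X) ≅ Hom(B, F X) ≅ H⁰(F X)` need not be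
`k`-linear, as `F` is only additive. It is still semilinear enough for a `k`-basis of `Hom(T, X)`
to generate `H⁰(F X)` over `B`, which costs a factor `dim B`.
-/

universe v w

namespace GeissKrause

section Length

variable {k V V' V'' : Type*} [Ring k] [AddCommGroup V] [Module k V] [AddCommGroup V']
  [Module k V'] [AddCommGroup V''] [Module k V'']

lemma length_range_le_length (p : V'' →ₗ[k] V) :
    Module.length k (LinearMap.range p) ≤ Module.length k V'' :=
  Module.length_le_of_surjective p.rangeRestrict p.surjective_rangeRestrict

lemma length_le_length_map_add (W : Submodule k V) {r : V →ₗ[k] V'} {p : V'' →ₗ[k] V}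
    (h : LinearMap.ker r ≤ LinearMap.range p) :
    Module.length k W ≤ Module.length k (W.map r) + Module.length k V'' := by
  let r' := r.domRestrict W
  have ker_le : Module.length k (LinearMap.ker r') ≤ Module.length k (LinearMap.range p) :=
    Module.length_le_of_injective
      ((W.subtype.domRestrict (LinearMap.ker r')).codRestrict _ fun x => h x.2)
      ((LinearMap.injective_codRestrict_iff _).2
        (W.subtype_injective.comp (LinearMap.ker r').subtype_injective))
  calc Module.length k W
    _ = Module.length k (LinearMap.ker r') + Module.length k (LinearMap.range r') :=
      Module.length_eq_add_of_exact (LinearMap.ker r').subtype r'.rangeRestrict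
        (Submodule.subtype_injective _) r'.surjective_rangeRestrict
        (LinearMap.exact_iff.2 (by simp))
    _ ≤ Module.length k V'' + Module.length k (W.map r) := by
      rw [LinearMap.range_domRestrict]
      gcongr
      exact ker_le.trans (length_range_le_length p)
    _ = _ := add_comm _ _

end Length

section Compact

variable {D : Type*} [Category* D] [Preadditive D]

/-- The morphisms from `T` to the point of a cofan that are finite sums of morphisms factoring
through the injections of the cofan. -/
def finiteHoms (T : D) {I : Type*} {Y : I → D} (c : Cofan Y) : AddSubgroup (T ⟶ c.pt) :=
  ⨆ i, (Preadditive.rightComp T (c.inj i)).range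

/-- Compactness of an object of a preadditive category, with respect to coproducts indexed by
types in `Type w`. Quantifying over all colimit cofans means that the definition does not require
coproducts to exist. -/
def IsCompactObject (T : D) : Prop :=
  ∀ ⦃I : Type w⦄ ⦃Y : I → D⦄ (c : Cofan Y), IsColimit c → ∀ f : T ⟶ c.pt, f ∈ finiteHoms T c

variable {T T' : D} {I : Type*} {Y : I → D} {c : Cofan Y}

lemma comp_inj_mem_finiteHoms {i : I} (f : T ⟶ Y i) : f ≫ c.inj i ∈ finiteHoms T c :=
  AddSubgroup.mem_iSup_of_mem i ⟨f, rfl⟩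

@[elab_as_elim]
lemma finiteHoms_induction {p : ∀ f : T ⟶ c.pt, f ∈ finiteHoms T c → Prop}
    (comp_inj : ∀ i (f : T ⟶ Y i), p (f ≫ c.inj i) (comp_inj_mem_finiteHoms f))
    (zero : p 0 (zero_mem _))
    (add : ∀ f g hf hg, p f hf → p g hg → p (f + g) (add_mem hf hg))
    {f : T ⟶ c.pt} (hf : f ∈ finiteHoms T c) : p f hf := by
  refine AddSubgroup.iSup_induction' _ ?_ zero (fun f g hf hg => add f g hf hg) hf
  rintro i _ ⟨f, rfl⟩
  exact comp_inj i f

lemma comp_mem_finiteHoms (a : T' ⟶ T) {f : T ⟶ c.pt} (hf : f ∈ finiteHoms T c) :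
    a ≫ f ∈ finiteHoms T' c := by
  induction hf using finiteHoms_induction with
  | comp_inj i g => simpa using comp_inj_mem_finiteHoms (a ≫ g)
  | zero => simp
  | add f g _ _ hf hg => simpa using add_mem hf hg

namespace IsCompactObject

lemma of_iso (e : T ≅ T') (hT : IsCompactObject.{w} T) : IsCompactObject.{w} T' := by
  refine fun I Y c hc f => ?_
  simpa using comp_mem_finiteHoms e.inv (hT c hc (e.hom ≫ f))

lemma of_bijective {D' : Type*} [Category* D'] [Preadditive D'] (F : D ⥤ D') [F.Additive]
    [∀ I : Type w, PreservesColimitsOfShape (Discrete I) F] {P : D'} (hP : IsCompactObject.{w} P)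
    (u : P ⟶ F.obj T) (hu : ∀ X : D, Function.Bijective fun f : T ⟶ X => u ≫ F.map f) :
    IsCompactObject.{w} T := by
  intro I Y c hc f
  have exists_lift : ∀ g ∈ finiteHoms P (Cofan.mk (F.obj c.pt) fun i => F.map (c.inj i)),
      ∃ f ∈ finiteHoms T c, u ≫ F.map f = g := by
    intro g hg
    induction hg using finiteHoms_induction with
    | comp_inj i g =>
      obtain ⟨f, rfl⟩ := (hu _).2 g
      exact ⟨f ≫ c.inj i, comp_inj_mem_finiteHoms f, by simp [Cofan.inj]⟩
    | zero => exact ⟨0, zero_mem _, by simp⟩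
    | add _ _ _ _ hf hg =>
      obtain ⟨f, hf, rfl⟩ := hf
      obtain ⟨g, hg, rfl⟩ := hg
      exact ⟨f + g, add_mem hf hg, by simp⟩
  have hFc := isColimitCofanMkObjOfIsColimit F Y c.inj
    (IsColimit.ofIsoColimit hc (Cofan.ext (Iso.refl _) (by simp)))
  obtain ⟨f', hf', h⟩ := exists_lift _ (hP _ hFc (u ≫ F.map f))
  exact (hu _).1 h ▸ hf'

lemma of_map {D' : Type*} [Category* D'] [Preadditive D'] (F : D ⥤ D') [F.Full] [F.Faithful]
    [F.Additive] [∀ I : Type w, PreservesColimitsOfShape (Discrete I) F]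
    (hT : IsCompactObject.{w} (F.obj T)) : IsCompactObject.{w} T :=
  of_bijective F hT (𝟙 _) fun X => by
    simpa using (Functor.FullyFaithful.ofFullyFaithful F).map_bijective T X

end IsCompactObject

lemma isCompactObject_of_sigma [HasCoproducts.{w} D]
    (h : ∀ ⦃I : Type w⦄ (Y : I → D) (f : T ⟶ ∐ Y), f ∈ finiteHoms T (Cofan.mk _ (Sigma.ι Y))) :
    IsCompactObject.{w} T := by
  refine fun I Y c hc f => ?_
  let e : c.pt ≅ ∐ Y := hc.coconePointUniqueUpToIso (coproductIsCoproduct Y)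
  suffices ∀ g ∈ finiteHoms T (Cofan.mk (∐ Y) (Sigma.ι Y)), g ≫ e.inv ∈ finiteHoms T c by
    simpa using this _ (h Y (f ≫ e.hom))
  intro g hg
  induction hg using finiteHoms_induction with
  | comp_inj i g =>
    have : Sigma.ι Y i ≫ e.inv = c.inj i :=
      hc.comp_coconePointUniqueUpToIso_inv (coproductIsCoproduct Y) ⟨i⟩
    rw [Category.assoc]
    exact this ▸ comp_inj_mem_finiteHoms g
  | zero => simp
  | add f g _ _ hf hg => simpa using add_mem hf hg

section Coproduct

variable {I : Type w} (Y : I → D) [HasCoproduct Y]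

open Classical in
/-- The idempotent endomorphism of `∐ Y` projecting onto the summands with index in `s`. -/
noncomputable def sigmaProj (s : Finset I) : ∐ Y ⟶ ∐ Y :=
  ∑ i ∈ s, Sigma.π Y i ≫ Sigma.ι Y i

lemma ι_sigmaProj {s : Finset I} {i : I} (hi : i ∈ s) :
    Sigma.ι Y i ≫ sigmaProj Y s = Sigma.ι Y i := by
  classical
  rw [sigmaProj, Preadditive.comp_sum, Finset.sum_eq_single_of_mem i hi fun j _ hj => by
    rw [Sigma.ι_π_of_ne_assoc _ hj.symm, zero_comp]]
  convert Sigma.ι_π_eq_id_assoc Y i (Sigma.ι Y i)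

variable {Y}

lemma IsCompactObject.exists_comp_sigmaProj (hT : IsCompactObject.{w} T) (f : T ⟶ ∐ Y) :
    ∃ s : Finset I, f ≫ sigmaProj Y s = f := by
  classical
  suffices ∃ s : Finset I, ∀ s' ⊇ s, f ≫ sigmaProj Y s' = f from
    this.imp fun s hs => hs s subset_rfl
  have hf : f ∈ finiteHoms T (Cofan.mk (∐ Y) (Sigma.ι Y)) :=
    hT _ (coproductIsCoproduct Y) f
  induction hf using finiteHoms_induction with
  | comp_inj i g =>
    refine ⟨{i}, fun s' hs' => ?_⟩
    rw [Category.assoc]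
    exact congrArg (g ≫ ·) (ι_sigmaProj Y (hs' (Finset.mem_singleton_self i)))
  | zero => exact ⟨∅, by simp⟩
  | add f g _ _ hf hg =>
    obtain ⟨s, hs⟩ := hf
    obtain ⟨t, ht⟩ := hg
    refine ⟨s ∪ t, fun s' hs' => ?_⟩
    rw [Preadditive.add_comp, hs _ (Finset.union_subset_left hs'),
      ht _ (Finset.union_subset_right hs')]

lemma comp_sigmaProj_mem_finiteHoms (f : T ⟶ ∐ Y) (s : Finset I) :
    f ≫ sigmaProj Y s ∈ finiteHoms T (Cofan.mk _ (Sigma.ι Y)) := by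
  classical
  rw [sigmaProj, Preadditive.comp_sum]
  exact sum_mem fun i _ => by
    simpa using comp_inj_mem_finiteHoms (c := Cofan.mk _ (Sigma.ι Y)) (f ≫ Sigma.π Y i)

lemma IsCompactObject.exists_finite_factorization [HasCoproducts.{w} D]
    (hT : IsCompactObject.{w} T) (f : T ⟶ ∐ Y) :
    ∃ (s : Finset I) (a : T ⟶ ∐ fun i : s => Y i) (b : (∐ fun i : s => Y i) ⟶ ∐ Y), a ≫ b = f := by
  classical
  obtain ⟨s, hs⟩ := hT.exists_comp_sigmaProj f
  refine ⟨s, ∑ i : s, f ≫ Sigma.π Y i ≫ Sigma.ι (fun i : s => Y i) i,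
    Sigma.desc fun i => Sigma.ι Y i, ?_⟩
  conv_rhs => rw [← hs, sigmaProj, Preadditive.comp_sum, ← Finset.sum_coe_sort]
  simp only [Preadditive.sum_comp, Category.assoc, Sigma.ι_desc]

lemma IsCompactObject.sigma [Finite I] (hY : ∀ i, IsCompactObject.{w} (Y i)) :
    IsCompactObject.{w} (∐ Y) := by
  cases nonempty_fintype I
  have sigmaProj_univ : sigmaProj Y Finset.univ = 𝟙 _ :=
    Sigma.hom_ext _ _ fun i => by rw [ι_sigmaProj Y (Finset.mem_univ i), Category.comp_id]
  refine fun J Z c hc f => ?_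
  rw [← Category.id_comp f, ← sigmaProj_univ, sigmaProj, Preadditive.sum_comp]
  simp only [Category.assoc]
  exact sum_mem fun i _ => comp_mem_finiteHoms _ (hY i c hc _)

end Coproduct

end Compact

section HomBounded

variable {D : Type*} [Category.{v} D] [Preadditive D] (k : Type*) [Ring k]
  [Linear k D] {ι : Type*} (S : ι → D)

/-- A morphism `f : T ⟶ G` is `S`-bounded if, up to a constant factor, the length of the space of
morphisms `T ⟶ X` factoring through `f` is at most the supremum of the lengths of the `S j ⟶ X`.
For `f = 𝟙 T` this is a Geiss–Krause bound on `Hom(T, X)`. -/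
def IsHomBounded {T G : D} (f : T ⟶ G) : Prop :=
  ∃ N : ℕ, ∀ X : D, Module.length k (LinearMap.range (Linear.leftComp k X f)) ≤
    N * ⨆ j, Module.length k (S j ⟶ X)

variable {T G : D}

lemma IsHomBounded.zero : IsHomBounded k S (0 : T ⟶ G) := by
  refine ⟨0, fun X => ?_⟩
  have : LinearMap.range (Linear.leftComp k X (0 : T ⟶ G)) = ⊥ :=
    LinearMap.range_eq_bot.2 (by ext; simp)
  rw [this]
  simp

variable {k S}

lemma IsHomBounded.length_le (h : IsHomBounded k S (𝟙 T)) :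
    ∃ N : ℕ, ∀ X : D, Module.length k (T ⟶ X) ≤ N * ⨆ j, Module.length k (S j ⟶ X) := by
  obtain ⟨N, hN⟩ := h
  refine ⟨N, fun X => ?_⟩
  have : LinearMap.range (Linear.leftComp k X (𝟙 T)) = ⊤ :=
    LinearMap.range_eq_top.2 fun f => ⟨f, Category.id_comp f⟩
  rw [← Module.length_top, ← this]
  exact hN X

lemma IsHomBounded.sigma {I : Type w} [Finite I] (s : I → ι) [HasCoproduct fun i => S (s i)] :
    IsHomBounded k S (𝟙 (∐ fun i => S (s i))) := by
  cases nonempty_fintype I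
  refine ⟨Fintype.card I, fun X => ?_⟩
  let restrict : ((∐ fun i => S (s i)) ⟶ X) →ₗ[k] ∀ i, S (s i) ⟶ X :=
    LinearMap.pi fun i => Linear.leftComp k X (Sigma.ι (fun i => S (s i)) i)
  have restrict_injective : Function.Injective restrict := fun f g h =>
    Sigma.hom_ext _ _ fun i => congrFun h i
  calc Module.length k (LinearMap.range (Linear.leftComp k X (𝟙 _)))
    _ ≤ Module.length k ((∐ fun i => S (s i)) ⟶ X) :=
      Module.length_le_of_injective (Submodule.subtype _) (Submodule.subtype_injective _)
    _ ≤ ∑ i, Module.length k (S (s i) ⟶ X) :=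
      (Module.length_le_of_injective restrict restrict_injective).trans_eq
        (Module.length_pi_of_fintype k _)
    _ ≤ ∑ _ : I, ⨆ j, Module.length k (S j ⟶ X) :=
      Finset.sum_le_sum fun i _ => le_iSup (fun j => Module.length k (S j ⟶ X)) (s i)
    _ = Fintype.card I * ⨆ j, Module.length k (S j ⟶ X) := by simp

end HomBounded

section Triangulated

variable {D : Type*} [Category.{v} D] [Preadditive D] [HasShift D ℤ]
  [∀ n : ℤ, (shiftFunctor D n).Additive]

lemma IsCompactObject.shift {T : D} (hT : IsCompactObject.{w} T) (n : ℤ) :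
    IsCompactObject.{w} (T⟦n⟧) :=
  .of_map (shiftFunctor D (-n)) (hT.of_iso (shiftShiftNeg T n).symm)

open Pretriangulated

variable [HasZeroObject D] [Pretriangulated D]

lemma IsCompactObject.of_distTriang [HasCoproducts.{w} D] {T₁ T₂ T₃ : D} {a : T₁ ⟶ T₂}
    {b : T₂ ⟶ T₃} {d : T₃ ⟶ T₁⟦(1 : ℤ)⟧} (h : Triangle.mk a b d ∈ distTriang D)
    (h₂ : IsCompactObject.{w} T₂) (h₃ : IsCompactObject.{w} T₃) : IsCompactObject.{w} T₁ := by
  refine isCompactObject_of_sigma fun I Y f => ?_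
  let w : T₃⟦(-1 : ℤ)⟧ ⟶ T₁ := (Triangle.mk a b d).invRotate.mor₁
  obtain ⟨s, hs⟩ := (h₃.shift (-1)).exists_comp_sigmaProj (w ≫ f)
  obtain ⟨g, hg : f - f ≫ sigmaProj Y s = a ≫ g⟩ :=
    Triangle.yoneda_exact₂ _ (inv_rot_of_distTriang _ h) (f - f ≫ sigmaProj Y s)
      (show w ≫ (f - f ≫ sigmaProj Y s) = 0 by simpa [sub_eq_zero] using hs.symm)
  rw [← sub_add_cancel f (f ≫ sigmaProj Y s), hg]
  exact add_mem (comp_mem_finiteHoms _ (h₂ _ (coproductIsCoproduct Y) g))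
    (comp_sigmaProj_mem_finiteHoms f s)

variable {k : Type*} [Ring k] [Linear k D] {ι : Type*} {S : ι → D}

/- Restriction along `a` maps the morphisms factoring through `f` to those factoring through
`a ≫ f`, and its kernel consists of morphisms factoring through `b`. -/
lemma IsHomBounded.of_distTriang {T₁ T₂ T₃ G : D} {a : T₁ ⟶ T₂} {b : T₂ ⟶ T₃} {d : T₃ ⟶ T₁⟦(1 : ℤ)⟧}
    (h : Triangle.mk a b d ∈ distTriang D) {f : T₂ ⟶ G} (hf : IsHomBounded k S (a ≫ f))
    (h₃ : IsHomBounded k S (𝟙 T₃)) : IsHomBounded k S f := by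
  obtain ⟨M, hM⟩ := hf
  obtain ⟨N, hN⟩ := h₃.length_le
  refine ⟨M + N, fun X => ?_⟩
  have exact_comp :
      LinearMap.ker (Linear.leftComp k X a) ≤ LinearMap.range (Linear.leftComp k X b) := fun x hx =>
    (Triangle.yoneda_exact₂ _ h x hx).imp fun _ hy => hy.symm
  have map_range : (LinearMap.range (Linear.leftComp k X f)).map (Linear.leftComp k X a) =
      LinearMap.range (Linear.leftComp k X (a ≫ f)) := by
    rw [← LinearMap.range_comp]
    congr 1
    ext
    simp
  calc Module.length k (LinearMap.range (Linear.leftComp k X f))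
    _ ≤ Module.length k (LinearMap.range (Linear.leftComp k X (a ≫ f))) +
          Module.length k (T₃ ⟶ X) := map_range ▸ length_le_length_map_add _ exact_comp
    _ ≤ (M + N : ℕ) * ⨆ j, Module.length k (S j ⟶ X) := by
      rw [Nat.cast_add, add_mul]
      exact add_le_add (hM X) (hN X)

end Triangulated

section Telescope

variable {D : Type*} [Category* D] [HasCoproducts.{w} D] (G : ℕ ⥤ D)

/-- The coproduct of the objects of a tower; the indices are lifted to the universe in which `D` has
coproducts. -/
noncomputable abbrev telescope : D := ∐ fun n : ULift.{w} ℕ => G.obj n.down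

/-- The injection of the `n`-th object of a tower into its telescope. -/
noncomputable abbrev telescopeι (n : ℕ) : G.obj n ⟶ telescope.{w} G :=
  Sigma.ι (fun n : ULift.{w} ℕ => G.obj n.down) ⟨n⟩

/-- The endomorphism of `∐ G n` induced by the transition morphisms `G n ⟶ G (n + 1)`. -/
noncomputable def telescopeShift : telescope.{w} G ⟶ telescope.{w} G :=
  Sigma.desc fun n => G.map (homOfLE n.down.le_succ) ≫ telescopeι G (n.down + 1)

@[simp]
lemma ι_telescopeShift (n : ℕ) : telescopeι.{w} G n ≫ telescopeShift G =
    G.map (homOfLE n.le_succ) ≫ telescopeι G (n + 1) := by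
  simp [telescopeShift]

variable [Preadditive D]

/-- The projection of the telescope of a tower onto its `n`-th object. -/
noncomputable abbrev telescopeπ (n : ℕ) : telescope.{w} G ⟶ G.obj n :=
  Sigma.π (fun n : ULift.{w} ℕ => G.obj n.down) ⟨n⟩

lemma telescopeShift_π_zero : telescopeShift.{w} G ≫ telescopeπ G 0 = 0 :=
  Sigma.hom_ext _ _ fun n => by
    simp [telescopeShift, Sigma.ι_π_of_ne]

lemma telescopeShift_π_succ (n : ℕ) : telescopeShift.{w} G ≫ telescopeπ G (n + 1) =
    telescopeπ G n ≫ G.map (homOfLE n.le_succ) := by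
  refine Sigma.hom_ext _ _ fun m => ?_
  obtain ⟨m⟩ := m
  obtain rfl | hmn := eq_or_ne m n
  · simp [telescopeShift]
  · simp [telescopeShift, Sigma.ι_π_of_ne, Sigma.ι_π_of_ne_assoc, hmn]

/- If `v` solves `v ≫ (𝟙 - shift) = ι₀`, that is `v = ι₀ + v ≫ shift`, its components are determined
recursively. -/
lemma exists_comp_telescopeπ_eq_map [IsIso (𝟙 (telescope.{w} G) - telescopeShift G)] :
    ∃ v : G.obj 0 ⟶ telescope.{w} G, ∀ n, v ≫ telescopeπ G n = G.map (homOfLE n.zero_le) := by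
  let v := telescopeι G 0 ≫ inv (𝟙 (telescope.{w} G) - telescopeShift G)
  have hv : v = telescopeι G 0 + v ≫ telescopeShift G := by
    rw [← sub_eq_iff_eq_add]
    calc v - v ≫ telescopeShift G
      _ = v ≫ (𝟙 _ - telescopeShift G) := by rw [Preadditive.comp_sub, Category.comp_id]
      _ = telescopeι G 0 := by simp only [v, Category.assoc, IsIso.inv_hom_id, Category.comp_id]
  refine ⟨v, fun n => ?_⟩
  induction n with
  | zero =>
    rw [hv, Preadditive.add_comp, Category.assoc, telescopeShift_π_zero]
    simp
  | succ n ih =>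
    rw [hv, Preadditive.add_comp, Category.assoc, telescopeShift_π_succ, reassoc_of% ih,
      ← G.map_comp]
    simp [Sigma.ι_π_of_ne]

lemma IsCompactObject.exists_comp_telescopeπ_eq_zero {T : D} (hT : IsCompactObject.{w} T)
    (f : T ⟶ telescope.{w} G) : ∃ n, f ≫ telescopeπ G n = 0 := by
  obtain ⟨s, hs⟩ := hT.exists_comp_sigmaProj f
  obtain ⟨n, hn⟩ := Infinite.exists_notMem_finset s
  refine ⟨n.down, ?_⟩
  rw [← hs, sigmaProj]
  simp only [Preadditive.comp_sum, Preadditive.sum_comp, Category.assoc]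
  refine Finset.sum_eq_zero fun i hi => ?_
  have hin : i ≠ n := fun h => hn (h ▸ hi)
  rw [Sigma.ι_π_of_ne _ hin, comp_zero, comp_zero]

end Telescope

section Ghost

variable {D : Type*} [Category.{v} D] [Preadditive D] [HasCoproducts.{max w v} D]
  {ι : Type w} (S : ι → D)

/-- A morphism `g : G ⟶ G'` which kills every morphism from an object of the family `S`, and such
that every morphism killed by `g` factors through a coproduct of objects of `S`. -/
structure IsUniversalGhost {G G' : D} (g : G ⟶ G') : Prop where
  comp_eq_zero {j : ι} (s : S j ⟶ G) : s ≫ g = 0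
  exists_factorization {T : D} (f : T ⟶ G) (hf : f ≫ g = 0) :
    ∃ (I : Type (max w v)) (s : I → ι) (a : T ⟶ ∐ fun i => S (s i))
      (b : (∐ fun i => S (s i)) ⟶ G), a ≫ b = f

variable {S}

lemma comp_telescopeShift_eq_zero (hS : ∀ j, IsCompactObject.{max w v} (S j)) {G : ℕ ⥤ D}
    (hG : ∀ n : ℕ, IsUniversalGhost S (G.map (homOfLE n.le_succ))) {j : ι}
    (s : S j ⟶ telescope.{max w v} G) : s ≫ telescopeShift G = 0 := by
  have hs : s ∈ finiteHoms (S j) (Cofan.mk _ fun n : ULift ℕ => telescopeι G n.down) :=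
    hS j _ (coproductIsCoproduct fun n : ULift ℕ => G.obj n.down) s
  induction hs using finiteHoms_induction with
  | comp_inj n f =>
    have : f ≫ G.map (homOfLE n.down.le_succ) = 0 := (hG n.down).comp_eq_zero f
    calc (f ≫ telescopeι G n.down) ≫ telescopeShift G
      _ = (f ≫ G.map (homOfLE n.down.le_succ)) ≫ telescopeι G (n.down + 1) := by simp
      _ = 0 := by rw [this, zero_comp]
  | zero => exact zero_comp
  | add f g _ _ hf hg => exact (Preadditive.add_comp ..).trans (by rw [hf, hg, add_zero])

/- The shift of the telescope vanishes on the objects of `S`, so that `𝟙 - shift` acts as the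
identity on morphisms from these. -/
lemma isIso_one_sub_telescopeShift (hS : ∀ j, IsCompactObject.{max w v} (S j))
    (hS' : (ObjectProperty.ofObj S).IsDetecting) {G : ℕ ⥤ D}
    (hG : ∀ n : ℕ, IsUniversalGhost S (G.map (homOfLE n.le_succ))) :
    IsIso (𝟙 (telescope.{max w v} G) - telescopeShift G) := by
  refine hS' _ ?_
  rintro _ ⟨j⟩ s
  have comp_eq (t : S j ⟶ telescope G) : t ≫ (𝟙 _ - telescopeShift G) = t := by
    rw [Preadditive.comp_sub, comp_telescopeShift_eq_zero hS hG, sub_zero, Category.comp_id]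
  exact ⟨s, comp_eq s, fun t ht => (comp_eq t).symm.trans ht⟩

lemma IsCompactObject.exists_comp_map_eq_zero (hS : ∀ j, IsCompactObject.{max w v} (S j))
    (hS' : (ObjectProperty.ofObj S).IsDetecting) {G : ℕ ⥤ D}
    (hG : ∀ n : ℕ, IsUniversalGhost S (G.map (homOfLE n.le_succ))) {T : D}
    (hT : IsCompactObject.{max w v} T) (f : T ⟶ G.obj 0) :
    ∃ n : ℕ, f ≫ G.map (homOfLE n.zero_le) = 0 := by
  have := isIso_one_sub_telescopeShift hS hS' hG
  obtain ⟨v, hv⟩ := exists_comp_telescopeπ_eq_map.{max w v} G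
  obtain ⟨n, hn⟩ := hT.exists_comp_telescopeπ_eq_zero G (f ≫ v)
  exact ⟨n, by rw [← hv, ← Category.assoc, hn]⟩

variable [HasZeroObject D] [HasShift D ℤ] [∀ n : ℤ, (shiftFunctor D n).Additive]
  [Pretriangulated D]

open Pretriangulated

variable (S) in
lemma exists_isUniversalGhost (G : D) : ∃ (G' : D) (g : G ⟶ G'), IsUniversalGhost S g := by
  let I := Σ j, (S j ⟶ G)
  let p : (∐ fun i : I => S i.1) ⟶ G := Sigma.desc fun i => i.2
  obtain ⟨G', g, d, h⟩ := distinguished_cocone_triangle p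
  have hpg : p ≫ g = 0 := comp_distTriang_mor_zero₁₂ _ h
  refine ⟨G', g, fun {j} s => ?_, fun f hf => ?_⟩
  · have : Sigma.ι (fun i : I => S i.1) ⟨j, s⟩ ≫ p = s := by simp [p]
    rw [← this, Category.assoc, hpg, comp_zero]
  · obtain ⟨a, ha⟩ := Triangle.coyoneda_exact₂ _ h f hf
    exact ⟨I, fun i => i.1, a, p, ha.symm⟩

variable (S) in
lemma exists_ghost_tower (T : D) : ∃ (G : ℕ ⥤ D) (_ : G.obj 0 = T),
    ∀ n : ℕ, IsUniversalGhost S (G.map (homOfLE n.le_succ)) := by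
  choose next ghost isUniversalGhost using exists_isUniversalGhost S
  let obj : ℕ → D := fun n => Nat.rec T (fun _ => next) n
  refine ⟨Functor.ofSequence (X := obj) fun n => ghost (obj n), rfl, fun n => ?_⟩
  rw [Functor.ofSequence_map_homOfLE_succ]
  exact isUniversalGhost (obj n)

lemma isHomBounded_of_comp_map_eq_zero (k : Type*) [Ring k] [Linear k D]
    (hS : ∀ j, IsCompactObject.{max w v} (S j)) {G : ℕ ⥤ D}
    (hG : ∀ n : ℕ, IsUniversalGhost S (G.map (homOfLE n.le_succ))) {T : D}
    (hT : IsCompactObject.{max w v} T) {f : T ⟶ G.obj 0} {n : ℕ}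
    (hf : f ≫ G.map (homOfLE n.zero_le) = 0) : IsHomBounded k S f := by
  induction n generalizing T with
  | zero =>
    obtain rfl : f = 0 := by simpa using hf
    exact .zero k S
  | succ n ih =>
    obtain ⟨I, s, a, b, hab⟩ := (hG n).exists_factorization (f ≫ G.map (homOfLE n.zero_le)) (by
      rwa [Category.assoc, ← G.map_comp])
    obtain ⟨t, a', b', rfl⟩ := hT.exists_finite_factorization a
    obtain ⟨T', w, d, h⟩ := distinguished_cocone_triangle₁ a'
    have hT' : IsCompactObject.{max w v} T' := .of_distTriang h hT (.sigma fun i => hS _)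
    have hwa : w ≫ a' = 0 := comp_distTriang_mor_zero₁₂ _ h
    refine .of_distTriang h (ih hT' ?_) (.sigma fun i : t => s i)
    rw [Category.assoc, ← hab, Category.assoc, reassoc_of% hwa, zero_comp]

theorem IsCompactObject.exists_length_le (k : Type*) [Ring k] [Linear k D]
    (hS : ∀ j, IsCompactObject.{max w v} (S j)) (hS' : (ObjectProperty.ofObj S).IsDetecting)
    {T : D} (hT : IsCompactObject.{max w v} T) :
    ∃ N : ℕ, ∀ X : D, Module.length k (T ⟶ X) ≤ N * ⨆ j, Module.length k (S j ⟶ X) := by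
  obtain ⟨G, rfl, hG⟩ := exists_ghost_tower S T
  obtain ⟨n, hn⟩ := hT.exists_comp_map_eq_zero hS hS' hG (𝟙 _)
  exact (isHomBounded_of_comp_map_eq_zero k hS hG hT hn).length_le

end Ghost

section Coproducts

variable {E E' E'' : Type*} [Category* E] [Category* E'] [Category* E''] {J : Type*}

lemma preservesCoproductsOfShape_of_existsUnique (G : E ⥤ E')
    (h : ∀ (K : J → E) (c : Cofan K), IsColimit c → ∀ (Y : E') (f : ∀ i, G.obj (K i) ⟶ Y),
      ∃! g : G.obj c.pt ⟶ Y, ∀ i, G.map (c.inj i) ≫ g = f i) :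
    PreservesColimitsOfShape (Discrete J) G := by
  suffices ∀ K : J → E, PreservesColimit (Discrete.functor K) G from
    ⟨fun {F} => preservesColimit_of_iso_diagram G (Discrete.natIsoFunctor (F := F)).symm⟩
  intro K
  refine ⟨fun {c} hc => ?_⟩
  choose desc hdesc huniq using fun s : Cocone (Discrete.functor K ⋙ G) =>
    h K c hc s.pt fun i => s.ι.app ⟨i⟩
  exact ⟨⟨desc, fun s j => hdesc s j.as, fun s m hm => huniq s m fun i => hm ⟨i⟩⟩⟩

lemma existsUnique_map_inj_comp_eq (G : E ⥤ E') [PreservesColimitsOfShape (Discrete J) G]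
    {K : J → E} {c : Cofan K} (hc : IsColimit c) {Y : E'} (f : ∀ i, G.obj (K i) ⟶ Y) :
    ∃! g : G.obj c.pt ⟶ Y, ∀ i, G.map (c.inj i) ≫ g = f i := by
  have hGc := isColimitOfPreserves G hc
  exact ⟨hGc.desc ⟨Y, Discrete.natTrans fun i => f i.as⟩, fun i => hGc.fac _ ⟨i⟩,
    fun g hg => hGc.hom_ext fun i =>
      (hg i.as).trans (hGc.fac ⟨Y, Discrete.natTrans fun i => f i.as⟩ i).symm⟩

lemma hasCoproductsOfShape_of_essSurj (G : E ⥤ E') [G.EssSurj]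
    [HasCoproductsOfShape J E] [PreservesColimitsOfShape (Discrete J) G] :
    HasCoproductsOfShape J E' := by
  refine ⟨fun F => ?_⟩
  let e : F ≅ Discrete.functor (fun i => G.objPreimage (F.obj ⟨i⟩)) ⋙ G :=
    Discrete.natIso fun i => (G.objObjPreimageIso (F.obj i)).symm
  exact hasColimit_of_iso e

lemma preservesCoproductsOfShape_of_essSurj_comp (G : E ⥤ E') (H : E' ⥤ E'') [G.EssSurj]
    [HasCoproductsOfShape J E] [PreservesColimitsOfShape (Discrete J) G]
    [PreservesColimitsOfShape (Discrete J) (G ⋙ H)] :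
    PreservesColimitsOfShape (Discrete J) H := by
  refine ⟨fun {F} => ?_⟩
  let K := Discrete.functor fun i => G.objPreimage (F.obj ⟨i⟩)
  let e : K ⋙ G ≅ F := Discrete.natIso fun i => G.objObjPreimageIso (F.obj i)
  have : PreservesColimit (K ⋙ G) H :=
    preservesColimit_of_preserves_colimit_cocone (isColimitOfPreserves G (colimit.isColimit K))
      (isColimitOfPreserves (G ⋙ H) (colimit.isColimit K))
  exact preservesColimit_of_iso_diagram H e

lemma isStableUnderCoproductsOfShape_inverseImage_isomorphisms (H : E ⥤ E')
    [PreservesColimitsOfShape (Discrete J) H] :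
    ((MorphismProperty.isomorphisms E').inverseImage H).IsStableUnderCoproductsOfShape J where
  condition _ _ _ _ h₁ h₂ f hf φ hφ :=
    (MorphismProperty.IsStableUnderColimitsOfShape.isomorphisms E' (Discrete J)).condition _ _ _ _
      (isColimitOfPreserves H h₁) (isColimitOfPreserves H h₂) (Functor.whiskerRight f H)
      (fun j => hf j) (H.map φ) fun j => by
        simpa using congrArg H.map (hφ j)

lemma desc_comp_inj_mem (W : MorphismProperty E) [W.IsStableUnderCoproductsOfShape J]
    [HasCoproductsOfShape J E] {K K' : J → E} {c : Cofan K} (hc : IsColimit c)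
    (s : ∀ i, K' i ⟶ K i) (hs : ∀ i, W (s i)) :
    W (Sigma.desc fun i => s i ≫ c.inj i) :=
  MorphismProperty.IsStableUnderColimitsOfShape.condition _ _ _ _
    (colimit.isColimit (Discrete.functor K')) hc (Discrete.natTrans fun i => s i.as)
    (fun i => hs i.as) _ fun i => colimit.ι_desc _ i

variable (L : E ⥤ E') (W : MorphismProperty E) [L.IsLocalization W]
  [W.HasRightCalculusOfFractions] [W.IsStableUnderCoproductsOfShape J] [HasCoproductsOfShape J E]

include W in
lemma exists_map_inj_comp_eq {K : J → E} {c : Cofan K} (hc : IsColimit c) {Y : E}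
    (f : ∀ i, L.obj (K i) ⟶ L.obj Y) :
    ∃ g : L.obj c.pt ⟶ L.obj Y, ∀ i, L.map (c.inj i) ≫ g = f i := by
  choose φ hφ using fun i => Localization.exists_rightFraction L W (f i)
  let s : ∐ (fun i => (φ i).X') ⟶ c.pt := Sigma.desc fun i => (φ i).s ≫ c.inj i
  have := Localization.inverts L W s (desc_comp_inj_mem W hc _ fun i => (φ i).hs)
  refine ⟨inv (L.map s) ≫ L.map (Sigma.desc fun i => (φ i).f), fun i => ?_⟩
  have := Localization.inverts L W (φ i).s (φ i).hs
  have hι : L.map (φ i).s ≫ L.map (c.inj i) = L.map (Sigma.ι _ i) ≫ L.map s := by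
    simp only [← L.map_comp, s, Sigma.ι_desc]
  rw [hφ, ← cancel_epi (L.map (φ i).s), reassoc_of% hι, IsIso.hom_inv_id_assoc, ← L.map_comp,
    Sigma.ι_desc, MorphismProperty.RightFraction.map_s_comp_map]

include W in
lemma map_eq_map_of_inj_comp {K : J → E} {c : Cofan K} (hc : IsColimit c) {Y : E} {g g' : c.pt ⟶ Y}
    (h : ∀ i, L.map (c.inj i ≫ g) = L.map (c.inj i ≫ g')) : L.map g = L.map g' := by
  choose K' s hs hsg using fun i => (MorphismProperty.map_eq_iff_precomp L W _ _).1 (h i)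
  refine (MorphismProperty.map_eq_iff_precomp L W _ _).2
    ⟨∐ K', _, desc_comp_inj_mem W hc s hs, Sigma.hom_ext _ _ fun i => ?_⟩
  simpa using hsg i

include W in
theorem preservesCoproductsOfShape_of_isLocalization [W.HasLeftCalculusOfFractions] :
    PreservesColimitsOfShape (Discrete J) L := by
  have := Localization.essSurj L W
  refine preservesCoproductsOfShape_of_existsUnique L fun K c hc Y f => ?_
  let e := L.objObjPreimageIso Y
  obtain ⟨g, hg⟩ := exists_map_inj_comp_eq L W hc fun i => f i ≫ e.inv
  refine ⟨g ≫ e.hom, fun i => by simp [reassoc_of% hg], fun g' hg' => ?_⟩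
  obtain ⟨φ, hφ, hφ'⟩ := Localization.exists_leftFraction₂ L W g (g' ≫ e.inv)
  have := Localization.inverts L W φ.s φ.hs
  have hgs : g ≫ L.map φ.s = L.map φ.f := hφ ▸ φ.fst.map_comp_map_s L _
  have hgs' : (g' ≫ e.inv) ≫ L.map φ.s = L.map φ.f' := hφ' ▸ φ.snd.map_comp_map_s L _
  suffices L.map φ.f' = L.map φ.f by
    rw [← hgs, ← hgs', cancel_mono] at this
    rw [← this, Category.assoc, e.inv_hom_id, Category.comp_id]
  refine map_eq_map_of_inj_comp L W hc fun i => ?_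
  rw [L.map_comp, L.map_comp, ← hgs, ← hgs', Category.assoc, reassoc_of% hg', reassoc_of% hg]

end Coproducts

section Homology

variable {C : Type*} [Category* C] [Abelian C] (J : Type*) [Category* J]
  [HasColimitsOfShape J C] [HasExactColimitsOfShape J C]

instance preservesColimitsOfShape_shortComplex_homologyFunctor :
    PreservesColimitsOfShape J (ShortComplex.homologyFunctor C) := by
  refine ⟨fun {F} => preservesColimit_of_preserves_colimit_cocone
    (ShortComplex.isColimitColimitCocone F) ?_⟩
  let S : ShortComplex (J ⥤ C) := (ShortComplex.functorEquivalence J C).inverse.obj F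
  let e : F ⋙ ShortComplex.homologyFunctor C ≅ S.homology :=
    NatIso.ofComponents (fun j => S.mapHomologyIso ((evaluation J C).obj j)) fun f =>
      ((Iso.eq_inv_comp _).1 (NatTrans.app_homology ((evaluation J C).map f) S)).symm
  let ι (j : J) : (evaluation J C).obj j ⟶ colim := { app := fun G => colimit.ι G j }
  refine (IsColimit.equivOfNatIsoOfIso e
    ((ShortComplex.homologyFunctor C).mapCocone (ShortComplex.colimitCocone F)) _
    (Cocone.ext (S.mapHomologyIso colim) fun j => ?_)).symm (colimit.isColimit S.homology)
  exact (Category.assoc _ _ _).trans (NatTrans.app_homology (ι j) S).symm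

instance preservesColimitsOfShape_homologyFunctor {ι : Type*} (c : ComplexShape ι) (i : ι) :
    PreservesColimitsOfShape J (HomologicalComplex.homologyFunctor C c i) := by
  have : PreservesColimitsOfShape J (HomologicalComplex.shortComplexFunctor C c i) :=
    ⟨fun {F} => ⟨fun {s} hs => ⟨ShortComplex.isColimitOfIsColimitπ _
      (isColimitOfPreserves (HomologicalComplex.eval C c (c.prev i)) hs)
      (isColimitOfPreserves (HomologicalComplex.eval C c i) hs)
      (isColimitOfPreserves (HomologicalComplex.eval C c (c.next i)) hs)⟩⟩⟩
  exact preservesColimitsOfShape_of_natIso (HomologicalComplex.homologyFunctorIso C c i).symm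

end Homology

section Homotopy

variable {V : Type*} [Category* V] [Preadditive V] {ι : Type*} (c : ComplexShape ι)
  {J : Type*} [HasCoproductsOfShape J V]
open HomologicalComplex

lemma nonempty_homotopy_of_inj_comp {K : J → HomologicalComplex V c} {s : Cofan K}
    (hs : IsColimit s) {L : HomologicalComplex V c} {f g : s.pt ⟶ L}
    (h : ∀ i, Nonempty (Homotopy (s.inj i ≫ f) (s.inj i ≫ g))) : Nonempty (Homotopy f g) := by
  have ext {n : ι} {Z : V} {a b : s.pt.X n ⟶ Z}
      (hab : ∀ i, (s.inj i).f n ≫ a = (s.inj i).f n ≫ b) : a = b :=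
    (existsUnique_map_inj_comp_eq (eval V c n) hs _).unique hab fun _ => rfl
  have glue (n m : ι) : ∃ H : s.pt.X n ⟶ L.X m, ∀ i, (s.inj i).f n ≫ H = (h i).some.hom n m :=
    (existsUnique_map_inj_comp_eq (eval V c n) hs fun i => (h i).some.hom n m).exists
  choose H hH using glue
  refine ⟨{ hom := H, zero := fun n m hnm => ext fun i => ?_, comm := fun n => ext fun i => ?_ }⟩
  · rw [comp_zero, ← (h i).some.zero n m hnm]
    exact hH n m i
  · rw [Preadditive.comp_add, Preadditive.comp_add, ← dNext_comp_left, ← prevD_comp_left]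
    refine ((h i).some.comm n).trans ?_
    congr 3 <;> funext n m <;> exact (hH n m i).symm

instance preservesCoproductsOfShape_quotient :
    PreservesColimitsOfShape (Discrete J) (HomotopyCategory.quotient V c) := by
  refine preservesCoproductsOfShape_of_existsUnique _ fun K s hs Y f => ?_
  obtain ⟨L, rfl⟩ := HomotopyCategory.quotient_obj_surjective Y
  choose φ hφ using fun i => (HomotopyCategory.quotient V c).map_surjective (f i)
  refine ⟨(HomotopyCategory.quotient V c).map (Cofan.IsColimit.desc hs φ), fun i => ?_,
    fun g hg => ?_⟩
  · rw [← Functor.map_comp, Cofan.IsColimit.fac, hφ]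
  · obtain ⟨g, rfl⟩ := (HomotopyCategory.quotient V c).map_surjective g
    obtain ⟨h⟩ := nonempty_homotopy_of_inj_comp c hs (f := g) (g := Cofan.IsColimit.desc hs φ)
      fun i => ⟨HomotopyCategory.homotopyOfEq _ _ (by
        rw [Functor.map_comp, hg, Cofan.IsColimit.fac, hφ])⟩
    exact HomotopyCategory.eq_of_homotopy _ _ h

end Homotopy

section DerivedCoproducts

variable {C : Type*} [Category* C] [Abelian C] (J : Type*) [HasCoproductsOfShape J C]
  [HasExactColimitsOfShape (Discrete J) C]

instance hasCoproductsOfShape_homotopyCategory :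
    HasCoproductsOfShape J (HomotopyCategory C (.up ℤ)) :=
  hasCoproductsOfShape_of_essSurj (HomotopyCategory.quotient C (.up ℤ))

instance preservesCoproductsOfShape_homotopyCategory_homologyFunctor (n : ℤ) :
    PreservesColimitsOfShape (Discrete J) (HomotopyCategory.homologyFunctor C (.up ℤ) n) := by
  have := preservesColimitsOfShape_of_natIso (J := Discrete J)
    (HomotopyCategory.homologyFunctorFactors C (.up ℤ) n).symm
  exact preservesCoproductsOfShape_of_essSurj_comp (HomotopyCategory.quotient C (.up ℤ)) _

instance isStableUnderCoproductsOfShape_quasiIso :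
    (HomotopyCategory.quasiIso C (.up ℤ)).IsStableUnderCoproductsOfShape J where
  condition _ _ _ _ h₁ h₂ f hf φ hφ n :=
    (isStableUnderCoproductsOfShape_inverseImage_isomorphisms
      (HomotopyCategory.homologyFunctor C (.up ℤ) n)).condition _ _ _ _ h₁ h₂ f
        (fun j => hf j n) φ hφ

variable [HasDerivedCategory.{w} C]

instance preservesCoproductsOfShape_Qh :
    PreservesColimitsOfShape (Discrete J) (DerivedCategory.Qh (C := C)) :=
  preservesCoproductsOfShape_of_isLocalization _ (HomotopyCategory.quasiIso C (.up ℤ))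

instance hasCoproductsOfShape_derivedCategory : HasCoproductsOfShape J (DerivedCategory C) :=
  hasCoproductsOfShape_of_essSurj DerivedCategory.Qh

instance preservesCoproductsOfShape_derivedCategory_homologyFunctor (n : ℤ) :
    PreservesColimitsOfShape (Discrete J) (DerivedCategory.homologyFunctor C n) := by
  have := preservesColimitsOfShape_of_natIso (J := Discrete J)
    (DerivedCategory.homologyFunctorFactorsh C n).symm
  exact preservesCoproductsOfShape_of_essSurj_comp DerivedCategory.Qh _

end DerivedCoproducts

section BijectiveMap

lemma bijective_map_iff_of_iso {C D : Type*} [Category* C] [Category* D] (F : C ⥤ D)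
    {X X' Y Y' : C} (α : X ≅ X') (β : Y ≅ Y') :
    Function.Bijective (F.map : (X ⟶ Y) → _) ↔ Function.Bijective (F.map : (X' ⟶ Y') → _) := by
  rw [← Function.Bijective.of_comp_iff F.map (α.homCongr β).bijective,
    ← Function.Bijective.of_comp_iff' ((F.mapIso α).homCongr (F.mapIso β)).bijective]
  exact iff_of_eq (congrArg _ (funext fun f => (F.map_homCongr α β f).symm))

lemma bijective_map_iff_of_natIso {C D : Type*} [Category* C] [Category* D] {F G : C ⥤ D}
    (e : F ≅ G) {X Y : C} :
    Function.Bijective (F.map : (X ⟶ Y) → _) ↔ Function.Bijective (G.map : (X ⟶ Y) → _) := by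
  rw [← Function.Bijective.of_comp_iff' ((e.app X).homCongr (e.app Y)).bijective]
  exact iff_of_eq (congrArg _ (funext fun f => by simp))

lemma bijective_map_obj_of_comp_iso {C D E : Type*} [Category* C] [Category* D] [Preadditive D]
    [Category* E] [Preadditive E] {L : C ⥤ D} [L.Full] {H : D ⥤ E} [H.Additive] {G : C ⥤ E}
    (e : L ⋙ H ≅ G) {X Y : C} (surj : Function.Surjective (G.map : (X ⟶ Y) → _))
    (map_eq_zero : ∀ f : X ⟶ Y, G.map f = 0 → L.map f = 0) :
    Function.Bijective (H.map : (L.obj X ⟶ L.obj Y) → _) := by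
  constructor
  · refine (injective_iff_map_eq_zero H.mapAddHom).2 fun f hf => ?_
    obtain ⟨g, rfl⟩ := L.map_surjective f
    replace hf : H.map (L.map g) = 0 := hf
    exact map_eq_zero g ((NatIso.naturality_1 e g).symm.trans (by simp [hf]))
  · intro φ
    obtain ⟨g, hg⟩ := surj (e.inv.app X ≫ φ ≫ e.hom.app Y)
    exact ⟨L.map g, (NatIso.naturality_2 e g).symm.trans (by simp [hg])⟩

end BijectiveMap

section HomFromProjective

open HomologicalComplex CochainComplex.HomComplex

variable {C : Type*} [Category* C] [Abelian C] {P : C} {n : ℤ}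

section
variable {ι : Type*} [DecidableEq ι] {c : ComplexShape ι} {j : ι} {K : HomologicalComplex C c}

variable (c P j) in
lemma projective_single_X [Projective P] (i : ι) : Projective (((single C c j).obj P).X i) := by
  by_cases h : i = j
  · subst h
    exact Projective.of_iso (singleObjXSelf c i P).symm inferInstance
  · exact (isZero_single_obj_X c j P i h).projective

lemma exists_eq_mkHomFromSingle (g : (single C c j).obj P ⟶ K) :
    ∃ ψ : P ⟶ K.cycles j, g = mkHomFromSingle (ψ ≫ K.iCycles j) (by simp) :=
  ⟨(singleObjCyclesSelfIso c j P).inv ≫ cyclesMap g j, by ext; simp⟩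

lemma homologyMap_mkHomFromSingle (ψ : P ⟶ K.cycles j) :
    homologyMap (mkHomFromSingle (ψ ≫ K.iCycles j) (by simp)) j =
      (singleObjHomologySelfIso c j P).hom ≫ ψ ≫ K.homologyπ j := by
  have cyclesMap_eq : cyclesMap (mkHomFromSingle (ψ ≫ K.iCycles j) (by simp)) j =
      (singleObjCyclesSelfIso c j P).hom ≫ ψ := by
    simp [← cancel_mono (K.iCycles j), singleObjCyclesSelfIso_hom]
  rw [← cancel_epi (homologyπ _ j), homologyπ_naturality, cyclesMap_eq,
    homologyπ_singleObjHomologySelfIso_hom_assoc, Category.assoc]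

lemma homologyFunctor_map_surjective_of_projective [Projective P] : Function.Surjective
    ((homologyFunctor C c j).map : ((single C c j).obj P ⟶ K) → _) := by
  intro (φ : ((single C c j).obj P).homology j ⟶ K.homology j)
  obtain ⟨ψ, hψ⟩ := Projective.factors ((singleObjHomologySelfIso c j P).inv ≫ φ) (K.homologyπ j)
  exact ⟨mkHomFromSingle (ψ ≫ K.iCycles j) (by simp),
    (homologyMap_mkHomFromSingle ψ).trans (by rw [hψ, Iso.hom_inv_id_assoc])⟩

end

variable {K : CochainComplex C ℤ}

lemma nonempty_homotopy_zero_of_f_eq {g : (CochainComplex.singleFunctor C n).obj P ⟶ K}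
    (χ : P ⟶ K.X (n - 1))
    (hg : g.f n = (singleObjXSelf (.up ℤ) n P).hom ≫ χ ≫ K.d (n - 1) n) :
    Nonempty (Homotopy g 0) := by
  have ofHom_eq : Cochain.ofHom g = Cochain.fromSingleMk (χ ≫ K.d (n - 1) n) (add_zero n) := by
    refine (Cochain.fromSingleEquiv (add_zero n)).injective ?_
    simp only [Cochain.fromSingleEquiv_fromSingleMk]
    simp [Cochain.fromSingleEquiv, hg]
  exact ⟨(Cochain.equivHomotopy _ _).symm ⟨Cochain.fromSingleMk χ (by lia), by
    rw [Cochain.δ_fromSingleMk χ _ 0 n (by lia), Cochain.ofHom_zero, add_zero, ofHom_eq]⟩⟩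

lemma nonempty_homotopy_zero_of_homologyFunctor_map_eq_zero [Projective P]
    {g : (CochainComplex.singleFunctor C n).obj P ⟶ K}
    (hg : (homologyFunctor C (.up ℤ) n).map g = 0) : Nonempty (Homotopy g 0) := by
  obtain ⟨ψ, rfl⟩ := exists_eq_mkHomFromSingle g
  have hψ : ψ ≫ K.homologyπ n = 0 := by
    rw [← cancel_epi (singleObjHomologySelfIso (.up ℤ) n P).hom, comp_zero]
    exact (homologyMap_mkHomFromSingle ψ).symm.trans hg
  have exact_toCycles :
      (ShortComplex.mk (K.toCycles (n - 1) n) (K.homologyπ n) (by simp)).Exact :=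
    ShortComplex.exact_of_g_is_cokernel _ (K.homologyIsCokernel (n - 1) n (by simp))
  obtain ⟨χ, rfl⟩ : ∃ χ : P ⟶ K.X (n - 1), χ ≫ K.toCycles (n - 1) n = ψ :=
    ⟨exact_toCycles.liftFromProjective ψ hψ, exact_toCycles.liftFromProjective_comp ψ hψ⟩
  exact nonempty_homotopy_zero_of_f_eq χ ((mkHomFromSingle_f _ _).trans (by simp))

lemma bijective_homotopyCategory_homologyFunctor_map [Projective P]
    (K : HomotopyCategory C (.up ℤ)) : Function.Bijective
      ((HomotopyCategory.homologyFunctor C (.up ℤ) n).map : ((HomotopyCategory.quotient C _).obj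
        ((CochainComplex.singleFunctor C n).obj P) ⟶ K) → _) := by
  obtain ⟨K, rfl⟩ := HomotopyCategory.quotient_obj_surjective K
  refine bijective_map_obj_of_comp_iso (HomotopyCategory.homologyFunctorFactors C (.up ℤ) n)
    homologyFunctor_map_surjective_of_projective fun g hg => ?_
  obtain ⟨h⟩ := nonempty_homotopy_zero_of_homologyFunctor_map_eq_zero hg
  exact (HomotopyCategory.eq_of_homotopy _ _ h).trans (Functor.map_zero _ _ _)

variable [HasDerivedCategory.{w} C]

theorem bijective_homologyFunctor_map_of_projective [Projective P] (X : DerivedCategory C) :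
    Function.Bijective ((DerivedCategory.homologyFunctor C n).map :
      ((DerivedCategory.singleFunctor C n).obj P ⟶ X) → _) := by
  have (i : ℤ) : Projective (((CochainComplex.singleFunctor C n).obj P).X i) :=
    projective_single_X P (.up ℤ) n i
  have := CochainComplex.isKProjective_of_projective ((CochainComplex.singleFunctor C n).obj P) n
  let K := DerivedCategory.Qh.objPreimage X
  let e : DerivedCategory.Qh.obj ((HomotopyCategory.quotient C (.up ℤ)).obj
      ((CochainComplex.singleFunctor C n).obj P)) ≅ (DerivedCategory.singleFunctor C n).obj P :=
    (DerivedCategory.quotientCompQhIso C).app ((CochainComplex.singleFunctor C n).obj P) ≪≫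
      (DerivedCategory.singleFunctorIsoCompQ C n).symm.app P
  rw [← bijective_map_iff_of_iso _ e (DerivedCategory.Qh.objObjPreimageIso X),
    ← Function.Bijective.of_comp_iff _ (CochainComplex.IsKProjective.Qh_map_bijective _ K)]
  exact (bijective_map_iff_of_natIso (DerivedCategory.homologyFunctorFactorsh C n)).2
    (bijective_homotopyCategory_homologyFunctor_map K)

theorem bijective_singleFunctorCompHomologyFunctorIso_inv_comp_map [Projective P]
    (X : DerivedCategory C) :
    Function.Bijective fun f : (DerivedCategory.singleFunctor C n).obj P ⟶ X =>
      (DerivedCategory.singleFunctorCompHomologyFunctorIso C n).inv.app P ≫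
        (DerivedCategory.homologyFunctor C n).map f :=
  (((DerivedCategory.singleFunctorCompHomologyFunctorIso C n).app P).homFromEquiv).bijective.comp
    (bijective_homologyFunctor_map_of_projective X)

end HomFromProjective

section CompactGeneration

variable {C : Type*} [Category* C] [Abelian C] [HasDerivedCategory.{v} C] {P : C} [Projective P]

lemma isCompactObject_singleFunctor_obj [HasCoproducts.{w} C]
    [∀ J : Type w, HasExactColimitsOfShape (Discrete J) C]
    (hP : IsCompactObject.{w} P) (n : ℤ) :
    IsCompactObject.{w} ((DerivedCategory.singleFunctor C n).obj P) :=
  .of_bijective (DerivedCategory.homologyFunctor C n) hP _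
    bijective_singleFunctorCompHomologyFunctorIso_inv_comp_map

lemma isDetecting_singleFunctor_obj (hP : IsDetector P) : (ObjectProperty.ofObj fun n : ℤ =>
    (DerivedCategory.singleFunctor C n).obj P).IsDetecting := by
  intro X Y f hf
  refine (DerivedCategory.isIso_iff C f).2 fun n => (isDetector_def P).1 hP _ fun h => ?_
  have hX := bijective_singleFunctorCompHomologyFunctorIso_inv_comp_map (P := P) (n := n) X
  have hY := bijective_singleFunctorCompHomologyFunctorIso_inv_comp_map (P := P) (n := n) Y
  obtain ⟨h, rfl⟩ := hY.2 h
  obtain ⟨g, rfl, hg⟩ := hf _ (ObjectProperty.ofObj_apply _ n) h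
  refine ⟨(DerivedCategory.singleFunctorCompHomologyFunctorIso C n).inv.app P ≫
    (DerivedCategory.homologyFunctor C n).map g, by simp, fun g' hg' => ?_⟩
  obtain ⟨g, rfl⟩ := hX.2 g'
  rw [hg g (hY.1 (by simpa using hg'))]

end CompactGeneration

section Linearity

variable (k : Type*) [Ring k] (C : Type*) [Category* C] [Abelian C] [Linear k C] (n : ℤ)

instance linear_homologicalComplex_homologyFunctor :
    (HomologicalComplex.homologyFunctor C (.up ℤ) n).Linear k where
  map_smul f r := ShortComplex.homologyMap_smul
    ((HomologicalComplex.shortComplexFunctor C (.up ℤ) n).map f) r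

variable [HasDerivedCategory.{w} C]

instance linear_derivedCategory_homologyFunctor :
    (DerivedCategory.homologyFunctor C n).Linear k :=
  let _ : Localization.Lifting DerivedCategory.Q (HomologicalComplex.quasiIso C (.up ℤ))
      (HomologicalComplex.homologyFunctor C (.up ℤ) n) (DerivedCategory.homologyFunctor C n) :=
    ⟨DerivedCategory.homologyFunctorFactors C n⟩
  (Localization.functor_linear_iff DerivedCategory.Q
    (HomologicalComplex.quasiIso C (.up ℤ)) k (HomologicalComplex.homologyFunctor C (.up ℤ) n)
    (DerivedCategory.homologyFunctor C n)).1 inferInstance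

variable {C n} (P : C) [Projective P] (X : DerivedCategory C)

/-- The isomorphism `Hom(P[-n], X) ≅ Hom(P, Hⁿ(X))` for `P` projective. -/
noncomputable def homSingleLinearEquiv :
    ((DerivedCategory.singleFunctor C n).obj P ⟶ X) ≃ₗ[k]
      (P ⟶ (DerivedCategory.homologyFunctor C n).obj X) :=
  .ofBijective (Linear.leftComp k _
      ((DerivedCategory.singleFunctorCompHomologyFunctorIso C n).inv.app P) ∘ₗ
        (DerivedCategory.homologyFunctor C n).mapLinearMap k)
    (bijective_singleFunctorCompHomologyFunctorIso_inv_comp_map X)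

variable {P X}

lemma homSingleLinearEquiv_apply (f : (DerivedCategory.singleFunctor C n).obj P ⟶ X) :
    homSingleLinearEquiv k P X f =
      (DerivedCategory.singleFunctorCompHomologyFunctorIso C n).inv.app P ≫
        (DerivedCategory.homologyFunctor C n).map f := rfl

lemma homSingleLinearEquiv_map_comp {Q : C} [Projective Q] (g : Q ⟶ P)
    (f : (DerivedCategory.singleFunctor C n).obj P ⟶ X) :
    homSingleLinearEquiv k Q X ((DerivedCategory.singleFunctor C n).map g ≫ f) =
      g ≫ homSingleLinearEquiv k P X f := by
  simp only [homSingleLinearEquiv_apply, Functor.map_comp]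
  exact ((DerivedCategory.singleFunctorCompHomologyFunctorIso C n).inv.naturality_assoc g _).symm

end Linearity

section DimensionBound

lemma length_le_length_mul_length {k R V M : Type*} [Field k] [Ring R] [Algebra k R]
    [AddCommGroup V] [Module k V] [AddCommGroup M] [Module k M] [Module R M] [IsScalarTower k R M]
    (φ : V →+ M) (hφ : Function.Surjective φ)
    (hsmul : ∀ r : k, ∃ b : R, ∀ v, φ (r • v) = b • φ v) :
    Module.length k M ≤ Module.length k V * Module.length k R := by
  let bs := Module.Basis.ofVectorSpace k V
  have hspan : Submodule.span R (Set.range (φ ∘ bs)) = ⊤ := by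
    refine eq_top_iff.2 fun m _ => ?_
    obtain ⟨v, rfl⟩ := hφ m
    induction bs.mem_span v using Submodule.span_induction with
    | mem _ hv =>
      obtain ⟨i, rfl⟩ := hv
      exact Submodule.subset_span ⟨i, rfl⟩
    | zero => simp
    | add v w _ _ hv hw => simpa using add_mem (hv trivial) (hw trivial)
    | smul r v _ hv =>
      obtain ⟨b, hb⟩ := hsmul r
      simpa [hb] using Submodule.smul_mem _ b (hv trivial)
  have hV : Module.length k V = ENat.card (Module.Basis.ofVectorSpaceIndex k V) := by
    simp [bs.repr.length_eq, Module.length_finsupp]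
  rw [hV, ← Module.length_finsupp]
  refine Module.length_le_of_surjective
    ((Finsupp.linearCombination R (φ ∘ bs)).restrictScalars k) (LinearMap.range_eq_top.1 ?_)
  rw [LinearMap.range_restrictScalars, Finsupp.range_linearCombination, hspan,
    Submodule.restrictScalars_top]

end DimensionBound

section RegularModule

variable (R : Type u) [Ring R]

instance projective_of_self : Projective (ModuleCat.of R R) :=
  ModuleCat.projective_of_free (Module.Basis.singleton Unit R)

variable {R}

/-- Evaluation at `1`, as an isomorphism `Hom(R, M) ≅ M`. -/
def homSelfLinearEquiv (S : Type*) [Semiring S] (M : ModuleCat.{u} R) [Module S M]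
    [SMulCommClass R S M] : (ModuleCat.of R R ⟶ M) ≃ₗ[S] M :=
  ModuleCat.homLinearEquiv.trans (LinearMap.ringLmapEquivSelf R S M)

lemma homSelfLinearEquiv_apply {S : Type*} [Semiring S] {M : ModuleCat.{u} R} [Module S M]
    [SMulCommClass R S M] (f : ModuleCat.of R R ⟶ M) :
    homSelfLinearEquiv S M f = f.hom (1 : R) := rfl

lemma homSelfLinearEquiv_comp {S : Type*} [Semiring S] {M N : ModuleCat.{u} R} [Module S M]
    [SMulCommClass R S M] [Module S N]
    [SMulCommClass R S N] (f : ModuleCat.of R R ⟶ M) (g : M ⟶ N) :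
    homSelfLinearEquiv S N (f ≫ g) = g.hom (homSelfLinearEquiv S M f) := rfl

lemma homSelfLinearEquiv_comp_eq_smul {S : Type*} [Semiring S] {M : ModuleCat.{u} R} [Module S M]
    [SMulCommClass R S M] (a : End (ModuleCat.of R R)) (f : ModuleCat.of R R ⟶ M) :
    homSelfLinearEquiv S M (a ≫ f) = a.hom (1 : R) • homSelfLinearEquiv S M f := by
  rw [homSelfLinearEquiv_apply, homSelfLinearEquiv_apply, ← map_smul, smul_eq_mul, mul_one]
  rfl

lemma homSelfLinearEquiv_symm_comp {S : Type*} [Semiring S] {M N : ModuleCat.{u} R} [Module S M]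
    [SMulCommClass R S M] [Module S N]
    [SMulCommClass R S N] (m : M) (g : M ⟶ N) :
    (homSelfLinearEquiv S M).symm m ≫ g = (homSelfLinearEquiv S N).symm (g.hom m) := by
  rw [LinearEquiv.eq_symm_apply, homSelfLinearEquiv_comp, LinearEquiv.apply_symm_apply]

variable (R)

lemma isSeparator_of_self : IsSeparator (ModuleCat.of R R) := fun X Y f g h => by
  ext x
  obtain ⟨s, rfl⟩ := (homSelfLinearEquiv ℕ X).surjective x
  exact congr(homSelfLinearEquiv ℕ Y $(h _ (by simp) s))

open scoped DirectSum in
lemma isCompactObject_of_self : IsCompactObject.{u} (ModuleCat.of R R) := by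
  classical
  refine isCompactObject_of_sigma fun I Y f => ?_
  have h (x : ⨁ i, Y i) : (homSelfLinearEquiv ℕ (.of R (⨁ i, Y i))).symm x ≫
      (ModuleCat.coprodIsoDirectSum Y).inv ∈ finiteHoms (.of R R) (Cofan.mk _ (Sigma.ι Y)) := by
    induction x using DirectSum.induction_on with
    | zero => simp
    | of i y =>
      have := comp_inj_mem_finiteHoms (c := Cofan.mk _ (Sigma.ι Y))
        ((homSelfLinearEquiv ℕ (Y i)).symm y)
      rwa [cofan_mk_inj, ← ModuleCat.lof_coprodIsoDirectSum_inv, ← Category.assoc,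
        homSelfLinearEquiv_symm_comp] at this
    | add x y hx hy => simpa using add_mem hx hy
  have := h (homSelfLinearEquiv ℕ _ (f ≫ (ModuleCat.coprodIsoDirectSum Y).hom))
  rwa [LinearEquiv.symm_apply_apply, Category.assoc, Iso.hom_inv_id, Category.comp_id] at this

end RegularModule

section CohomologicalLength

open scoped ModuleCat

variable (k : Type*) [Field k] {R : Type u} [Ring R] [Algebra k R]
  [HasDerivedCategory.{u} (ModuleCat.{u} R)]

/-- The dimension `dim_k Hⁱ(X)`, with value `⊤` when it is infinite. -/
noncomputable def cohomologyDim (i : ℤ) (X : DerivedCategory (ModuleCat.{u} R)) : ℕ∞ :=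
  Module.length k (Hobj R i X)

/-- The cohomological length `hl(X)`, with values in `ℕ∞`: unlike `hl`, it takes the value `⊤`,
and not a junk value, on complexes whose cohomology is infinite-dimensional or of unbounded
dimension. -/
noncomputable def cohomologicalLength (X : DerivedCategory (ModuleCat.{u} R)) : ℕ∞ :=
  ⨆ i : ℤ, cohomologyDim k i X

variable (R) in
/-- The regular module `R`, as a complex concentrated in degree `i`. -/
noncomputable abbrev regularStalk (i : ℤ) : DerivedCategory (ModuleCat.{u} R) :=
  (DerivedCategory.singleFunctor _ i).obj (.of R R)

variable {k} {i : ℤ} {X Y : DerivedCategory (ModuleCat.{u} R)}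

lemma cohomologyDim_eq_of_iso {n : ℤ} (e : Hobj R i X ≅ Hobj R n Y) :
    cohomologyDim k i X = cohomologyDim k n Y :=
  (e.toLinearEquiv.restrictScalars k).length_eq

lemma cohomologyDim_shift (n : ℤ) :
    cohomologyDim k i (X⟦n⟧) = cohomologyDim k (n + i) X :=
  cohomologyDim_eq_of_iso
    (((DerivedCategory.homologyFunctor (ModuleCat R) 0).shiftIso n i (n + i) rfl).app X)

lemma cohomologicalLength_shift (n : ℤ) :
    cohomologicalLength k (X⟦n⟧) = cohomologicalLength k X := by
  simp only [cohomologicalLength, cohomologyDim_shift]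
  exact (Equiv.addLeft n).iSup_comp (g := fun i => cohomologyDim k i X)

variable (k i X) in
/-- The isomorphism `Hom(R[-i], X) ≅ Hⁱ(X)`. -/
noncomputable def homRegularLinearEquiv :
    (regularStalk R i ⟶ X) ≃ₗ[k] Hobj R i X :=
  (homSingleLinearEquiv k _ X).trans (homSelfLinearEquiv k (Hobj R i X))

lemma iSup_length_regularStalk_hom :
    ⨆ i, Module.length k (regularStalk R i ⟶ X) = cohomologicalLength k X :=
  iSup_congr fun i => (homRegularLinearEquiv k i X).length_eq

lemma exists_homRegularLinearEquiv_comp_eq_smul (a : End (regularStalk R i)) :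
    ∃ r : R, ∀ (X : DerivedCategory (ModuleCat.{u} R)) (f : _ ⟶ X),
      homRegularLinearEquiv k i X (a ≫ f) = r • homRegularLinearEquiv k i X f := by
  obtain ⟨a, rfl⟩ := (DerivedCategory.singleFunctor _ i).map_surjective a
  refine ⟨a.hom (1 : R), fun X f => ?_⟩
  exact congr(homSelfLinearEquiv k (Hobj R i X) $(homSingleLinearEquiv_map_comp k a f)).trans
    (homSelfLinearEquiv_comp_eq_smul (S := k) (M := Hobj R i X) a (homSingleLinearEquiv k _ X f))

lemma cohomologyDim_obj_le {D : Type*} [Category* D] [Preadditive D] [Linear k D]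
    (F : D ⥤ DerivedCategory (ModuleCat.{u} R)) [F.Additive] [F.Full] {T : D}
    (e : F.obj T ≅ regularStalk R i) (X : D) :
    cohomologyDim k i (F.obj X) ≤ Module.length k (T ⟶ X) * Module.length k R := by
  let φ : (T ⟶ X) →+ Hobj R i (F.obj X) :=
    (homRegularLinearEquiv k i (F.obj X)).toAddMonoidHom.comp
      ((Preadditive.leftComp _ e.inv).comp F.mapAddHom)
  have hφ (f : T ⟶ X) : φ f = homRegularLinearEquiv k i (F.obj X) (e.inv ≫ F.map f) := rfl
  refine length_le_length_mul_length φ (fun x => ?_) fun r => ?_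
  · obtain ⟨f, rfl⟩ := (homRegularLinearEquiv k i (F.obj X)).surjective x
    exact ⟨F.preimage (e.hom ≫ f), by simp [hφ]⟩
  · obtain ⟨b, hb⟩ := exists_homRegularLinearEquiv_comp_eq_smul (k := k)
      (e.inv ≫ F.map (r • 𝟙 T) ≫ e.hom)
    refine ⟨b, fun f => ?_⟩
    rw [hφ, hφ, ← hb]
    simp [← F.map_comp]

variable (R i) in
lemma isCompactObject_regularStalk : IsCompactObject.{u} (regularStalk R i) :=
  isCompactObject_singleFunctor_obj (isCompactObject_of_self R) i

end CohomologicalLength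

section FiniteCohomologicalLength

open scoped ModuleCat

variable {k : Type u} [Field k] {R : Type u} [Ring R] [Algebra k R]
  [HasDerivedCategory.{u} (ModuleCat.{u} R)] {i : ℤ} {X : DerivedCategory (ModuleCat.{u} R)}

lemma hdim_eq_toNat : hdim k R i X = (cohomologyDim k i X).toNat := by
  rw [cohomologyDim, Module.length_eq_rank, Cardinal.toNat_toENat]
  rfl

lemma hl_le_of_cohomologicalLength_le {n : ℕ} (h : cohomologicalLength k X ≤ n) :
    hl k R X ≤ n := by
  refine csSup_le (Set.range_nonempty _) ?_
  rintro _ ⟨i, rfl⟩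
  exact hdim_eq_toNat.trans_le (ENat.toNat_le_of_le_natCast ((le_iSup _ i).trans h))

lemma bddAbove_range_hdim (hX : Bdd R X) : BddAbove (Set.range fun i => hdim k R i X) := by
  obtain ⟨a, b, h⟩ := hX
  refine (((Set.finite_Icc a b).image fun i => hdim k R i X).insert 0).bddAbove.mono ?_
  rintro _ ⟨i, rfl⟩
  by_cases hi : i < a ∨ b < i
  · have := ModuleCat.subsingleton_of_isZero (h i hi)
    exact .inl (by simp [hdim_eq_toNat, cohomologyDim, Module.length_eq_zero])
  · exact .inr ⟨i, by simpa using hi, rfl⟩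

lemma cohomologicalLength_le_hl (hX : InDb k R X) : cohomologicalLength k X ≤ hl k R X := by
  refine iSup_le fun i => ?_
  have : FiniteDimensional k (Hobj R i X) := hX.2 i
  calc cohomologyDim k i X
    _ = hdim k R i X := Module.length_eq_finrank k (Hobj R i X)
    _ ≤ hl k R X := Nat.cast_le.2 (le_csSup (bddAbove_range_hdim hX.1) ⟨i, rfl⟩)

end FiniteCohomologicalLength

end GeissKrause

open GeissKrause in
theorem hl_bound_of_derived_equivalence_general
    (k : Type*) [Field k] (A : Type u) [Ring A] [Algebra k A]
    [HasDerivedCategory.{u} (ModuleCat.{u} A)]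
    (B : Type u) [Ring B] [Algebra k B] [FiniteDimensional k B]
    [HasDerivedCategory.{u} (ModuleCat.{u} B)]
    (F : DerivedCategory (ModuleCat.{u} A) ⥤ DerivedCategory (ModuleCat.{u} B))
    [F.CommShift ℤ] [F.IsEquivalence] :
    ∃ N₁ : ℕ, ∀ X : DerivedCategory (ModuleCat.{u} A),
      cohomologicalLength k (F.obj X) ≤ N₁ * cohomologicalLength k X := by
  have := Functor.additive_of_preserves_binary_products F
  let e := F.objObjPreimageIso (regularStalk B 0)
  obtain ⟨N, hN⟩ := IsCompactObject.exists_length_le k (isCompactObject_regularStalk A)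
    (isDetecting_singleFunctor_obj (isSeparator_of_self A).isDetector)
    (.of_map F ((isCompactObject_regularStalk B 0).of_iso e.symm))
  refine ⟨N * Module.finrank k B, fun X => iSup_le fun j => ?_⟩
  calc cohomologyDim k j (F.obj X)
    _ = cohomologyDim k 0 ((F.obj X)⟦j⟧) := by rw [cohomologyDim_shift, add_zero]
    _ = cohomologyDim k 0 (F.obj (X⟦j⟧)) := cohomologyDim_eq_of_iso
      ((DerivedCategory.homologyFunctor _ 0).mapIso ((F.commShiftIso j).symm.app X))
    _ ≤ Module.length k (_ ⟶ X⟦j⟧) * Module.length k B := cohomologyDim_obj_le F e _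
    _ ≤ N * cohomologicalLength k (X⟦j⟧) * Module.length k B := by
      gcongr
      exact (hN (X⟦j⟧)).trans_eq congr(N * $iSup_length_regularStalk_hom)
    _ = (N * Module.finrank k B : ℕ) * cohomologicalLength k X := by
      rw [cohomologicalLength_shift, Module.length_eq_finrank, Nat.cast_mul, mul_right_comm]

theorem hl_bound_of_derived_equivalence
    (A : Type u) [Ring A] [Algebra k A] [FiniteDimensional k A]
    [HasDerivedCategory.{u} (ModuleCat.{u} A)]
    (B : Type u) [Ring B] [Algebra k B] [FiniteDimensional k B]
    [HasDerivedCategory.{u} (ModuleCat.{u} B)]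
    (F : DerivedCategory (ModuleCat.{u} A) ⥤ DerivedCategory (ModuleCat.{u} B))
    [F.CommShift ℤ] [F.IsTriangulated] [F.IsEquivalence] :
    ∃ N₁ : ℕ, ∀ X : DerivedCategory (ModuleCat.{u} A), InDb k A X →
      hl k B (F.obj X) ≤ N₁ * hl k A X := by
  obtain ⟨N, hN⟩ := hl_bound_of_derived_equivalence_general k A B F
  exact ⟨N, fun X hX => GeissKrause.hl_le_of_cohomologicalLength_le <|
    (hN X).trans (by push_cast; gcongr; exact GeissKrause.cohomologicalLength_le_hl hX)⟩
end

section
/- Let A and B be derived equivalent finite-dimensional algebras over an algebraically closed field. Then the global cohomological range of A is finite if and only if the global cohomological range of B is finite; likewise for global cohomological length and global cohomological width. -/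
/-!
STATEMENT 5: If `A` and `B` are derived equivalent finite-dimensional algebras over an
algebraically closed field, then `gl.hr A < ∞ ↔ gl.hr B < ∞`, and likewise for the
global cohomological length and the global cohomological width.
-/

open CategoryTheory Limits

universe u
variable (k : Type u) [Field k] [IsAlgClosed k]

/-!
A functor that preserves products and coproducts, such as `H^n ∘ F` for an equivalence `F`, sends a
matrix `⨁ X_j ⟶ ∏ Y_i` to an isomorphism as soon as all the functors `H^m` do, because cohomology
detects isomorphisms in the derived category and commutes with products and coproducts. The
identity matrix on the shifts `M[i]` of a module is such a matrix, so only finitely many of the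
modules `H^0 (F M[i])` are nonzero. A basis of `K^I` gives a matrix of scalars on `X`, invertible on
finite-dimensional cohomology; for `I = H^n (F X)` this expresses the identity family of elements
through finitely many scalar endomorphisms, so that `H^n (F X)` is finitely generated over `B`.

Every simple `A`-module is a retract of the semisimple quotient `M` of `A`. Hence the lengths of the
`H^0 (F M[i])` bound those of `H^0 (F S[i])` for all simple `S`, and by dévissage `dim H^n (F X)` is
at most the convolution of a finitely supported function with the dimensions of the `H^i (X)`. So
`F` multiplies `hl` by at most a constant and adds at most a constant to `hw`; the same holds for
its quasi-inverse.
-/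

section HomologyExactness

variable {C : Type*} [Category* C] [Abelian C] {J : Type*} [Category* J]

/-- The canonical transformation from the evaluation at `j` to the colimit functor. -/
noncomputable def evaluationToColim [HasColimitsOfShape J C] (j : J) :
    (evaluation J C).obj j ⟶ colim where
  app G := colimit.ι G j

/-- The canonical transformation from the limit functor to the evaluation at `j`. -/
noncomputable def limToEvaluation [HasLimitsOfShape J C] (j : J) :
    lim ⟶ (evaluation J C).obj j where
  app G := limit.π G j

/-- Homology commutes with evaluation: the homology of a diagram of short complexes is the
homology of the corresponding short complex of diagrams. -/
noncomputable def compHomologyFunctorIso (F : J ⥤ ShortComplex C) :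
    F ⋙ ShortComplex.homologyFunctor C ≅
      ((ShortComplex.functorEquivalence J C).inverse.obj F).homology :=
  let S := (ShortComplex.functorEquivalence J C).inverse.obj F
  NatIso.ofComponents (fun j => S.mapHomologyIso ((evaluation J C).obj j)) fun f => by
    have h := S.homologyMap_mapNatTrans ((evaluation J C).map f)
    rw [← Category.assoc, Iso.eq_comp_inv] at h
    exact h

/-- The cocone on a diagram of short complexes obtained by taking termwise colimits; its point is
written as the image under `colim` of a short complex of diagrams, so as to compare homologies. -/
noncomputable def shortComplexColimitCocone [HasColimitsOfShape J C] (F : J ⥤ ShortComplex C) :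
    Cocone F where
  pt := ((ShortComplex.functorEquivalence J C).inverse.obj F).map colim
  ι :=
    { app j := ((ShortComplex.functorEquivalence J C).inverse.obj F).mapNatTrans
        (evaluationToColim j)
      naturality i j f := by
        ext
        · exact (colimit.cocone (F ⋙ ShortComplex.π₁)).ι.naturality f
        · exact (colimit.cocone (F ⋙ ShortComplex.π₂)).ι.naturality f
        · exact (colimit.cocone (F ⋙ ShortComplex.π₃)).ι.naturality f }

/-- The termwise colimit cocone of a diagram of short complexes is a colimit. -/
noncomputable def isColimitShortComplexColimitCocone [HasColimitsOfShape J C]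
    (F : J ⥤ ShortComplex C) : IsColimit (shortComplexColimitCocone F) :=
  ShortComplex.isColimitOfIsColimitπ _ (colimit.isColimit (F ⋙ ShortComplex.π₁))
    (colimit.isColimit (F ⋙ ShortComplex.π₂)) (colimit.isColimit (F ⋙ ShortComplex.π₃))

/-- The cone on a diagram of short complexes obtained by taking termwise limits, dual to
`shortComplexColimitCocone`. -/
noncomputable def shortComplexLimitCone [HasLimitsOfShape J C] (F : J ⥤ ShortComplex C) :
    Cone F where
  pt := ((ShortComplex.functorEquivalence J C).inverse.obj F).map lim
  π :=
    { app j := ((ShortComplex.functorEquivalence J C).inverse.obj F).mapNatTrans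
        (limToEvaluation j)
      naturality i j f := by
        ext
        · exact (limit.cone (F ⋙ ShortComplex.π₁)).π.naturality f
        · exact (limit.cone (F ⋙ ShortComplex.π₂)).π.naturality f
        · exact (limit.cone (F ⋙ ShortComplex.π₃)).π.naturality f }

/-- The termwise limit cone of a diagram of short complexes is a limit. -/
noncomputable def isLimitShortComplexLimitCone [HasLimitsOfShape J C]
    (F : J ⥤ ShortComplex C) : IsLimit (shortComplexLimitCone F) :=
  ShortComplex.isLimitOfIsLimitπ _ (limit.isLimit (F ⋙ ShortComplex.π₁))
    (limit.isLimit (F ⋙ ShortComplex.π₂)) (limit.isLimit (F ⋙ ShortComplex.π₃))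

instance preservesColimitsOfShape_shortComplex_homologyFunctor [HasColimitsOfShape J C]
    [HasExactColimitsOfShape J C] :
    PreservesColimitsOfShape J (ShortComplex.homologyFunctor C) where
  preservesColimit {F} := by
    let S := (ShortComplex.functorEquivalence J C).inverse.obj F
    refine preservesColimit_of_preserves_colimit_cocone (isColimitShortComplexColimitCocone F)
      (((IsColimit.precomposeHomEquiv (compHomologyFunctorIso F) _).symm
        (colimit.isColimit S.homology)).ofIsoColimit
          (Cocone.ext (S.mapHomologyIso colim).symm fun j => ?_))
    have h := S.homologyMap_mapNatTrans (evaluationToColim j)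
    rw [← Category.assoc] at h
    exact h.symm

instance preservesLimitsOfShape_shortComplex_homologyFunctor [HasLimitsOfShape J C]
    [HasExactLimitsOfShape J C] :
    PreservesLimitsOfShape J (ShortComplex.homologyFunctor C) where
  preservesLimit {F} := by
    let S := (ShortComplex.functorEquivalence J C).inverse.obj F
    refine preservesLimit_of_preserves_limit_cone (isLimitShortComplexLimitCone F)
      (((IsLimit.postcomposeHomEquiv (compHomologyFunctorIso F).symm _).symm
        (limit.isLimit S.homology)).ofIsoLimit
          (Cone.ext (S.mapHomologyIso lim).symm fun j => ?_))
    have h := S.homologyMap_mapNatTrans (limToEvaluation j)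
    rw [← Iso.inv_comp_eq] at h
    exact h.symm

variable {ι : Type*} (c : ComplexShape ι) (i : ι)

instance preservesColimitsOfShape_shortComplexFunctor [HasColimitsOfShape J C] :
    PreservesColimitsOfShape J (HomologicalComplex.shortComplexFunctor C c i) where
  preservesColimit := ⟨fun hs => ⟨ShortComplex.isColimitOfIsColimitπ _
    (isColimitOfPreserves (HomologicalComplex.eval C c _) hs)
    (isColimitOfPreserves (HomologicalComplex.eval C c _) hs)
    (isColimitOfPreserves (HomologicalComplex.eval C c _) hs)⟩⟩

instance preservesLimitsOfShape_shortComplexFunctor [HasLimitsOfShape J C] :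
    PreservesLimitsOfShape J (HomologicalComplex.shortComplexFunctor C c i) where
  preservesLimit := ⟨fun hs => ⟨ShortComplex.isLimitOfIsLimitπ _
    (isLimitOfPreserves (HomologicalComplex.eval C c _) hs)
    (isLimitOfPreserves (HomologicalComplex.eval C c _) hs)
    (isLimitOfPreserves (HomologicalComplex.eval C c _) hs)⟩⟩

instance preservesColimitsOfShape_homologicalComplex_homologyFunctor [HasColimitsOfShape J C]
    [HasExactColimitsOfShape J C] :
    PreservesColimitsOfShape J (HomologicalComplex.homologyFunctor C c i) :=
  preservesColimitsOfShape_of_natIso (HomologicalComplex.homologyFunctorIso C c i).symm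

instance preservesLimitsOfShape_homologicalComplex_homologyFunctor [HasLimitsOfShape J C]
    [HasExactLimitsOfShape J C] :
    PreservesLimitsOfShape J (HomologicalComplex.homologyFunctor C c i) :=
  preservesLimitsOfShape_of_natIso (HomologicalComplex.homologyFunctorIso C c i).symm

end HomologyExactness

section PreservedColimMap

variable {C D : Type*} [Category* C] [Category* D] {J : Type*} [Category* J] (H : C ⥤ D)
  {F G : J ⥤ C} (α : F ⟶ G)

lemma isIso_map_colimMap [HasColimit F] [HasColimit G] [PreservesColimit F H]
    [PreservesColimit G H] (h : ∀ j, IsIso (H.map (α.app j))) : IsIso (H.map (colimMap α)) := by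
  have : IsIso (Functor.whiskerRight α H) := (NatTrans.isIso_iff_isIso_app _).2 h
  let hF := isColimitOfPreserves H (colimit.isColimit F)
  let hG := isColimitOfPreserves H (colimit.isColimit G)
  have hα : H.map (colimMap α) =
      (hF.coconePointsIsoOfNatIso hG (asIso (Functor.whiskerRight α H))).hom :=
    hF.hom_ext fun j => by
      rw [hF.comp_coconePointsIsoOfNatIso_hom]
      exact (H.map_comp _ _).symm.trans (congr(H.map $(ι_colimMap α j)).trans (H.map_comp _ _))
  exact hα ▸ inferInstance

lemma isIso_map_limMap [HasLimit F] [HasLimit G] [PreservesLimit F H]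
    [PreservesLimit G H] (h : ∀ j, IsIso (H.map (α.app j))) : IsIso (H.map (limMap α)) := by
  have : IsIso (Functor.whiskerRight α H) := (NatTrans.isIso_iff_isIso_app _).2 h
  let hF := isLimitOfPreserves H (limit.isLimit F)
  let hG := isLimitOfPreserves H (limit.isLimit G)
  have hα : H.map (limMap α) =
      (hF.conePointsIsoOfNatIso hG (asIso (Functor.whiskerRight α H))).hom :=
    hG.hom_ext fun j => by
      rw [hF.conePointsIsoOfNatIso_hom_comp]
      exact (H.map_comp _ _).symm.trans (congr(H.map $(limMap_π α j)).trans (H.map_comp _ _))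
  exact hα ▸ inferInstance

end PreservedColimMap

section DerivedCoproducts

open DerivedCategory

variable {C : Type*} [Category* C] [Abelian C] {J : Type*} [HasDerivedCategory C]

lemma isIso_Q_map_iff_isIso_homologyMap {K L : CochainComplex C ℤ} (f : K ⟶ L) :
    IsIso (Q.map f) ↔ ∀ n, IsIso ((HomologicalComplex.homologyFunctor C _ n).map f) := by
  simp only [isIso_Q_map_iff_quasiIso, quasiIso_iff, quasiIsoAt_iff_isIso_homologyMap]
  rfl

/-- Every family of objects of the derived category lifts to a family of complexes. -/
noncomputable def objPreimageCompQIso (F : Discrete J ⥤ DerivedCategory C) :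
    Discrete.functor (fun j => Q.objPreimage (F.obj ⟨j⟩)) ⋙ Q ≅ F :=
  Discrete.natIso fun _ => Q.objObjPreimageIso _

section Coproducts

variable [HasCoproductsOfShape J C] [HasExactColimitsOfShape (Discrete J) C]

lemma exists_Q_ι_comp_eq (K : J → CochainComplex C ℤ) {Y : DerivedCategory C}
    (f : ∀ j, Q.obj (K j) ⟶ Y) :
    ∃ g : Q.obj (∐ K) ⟶ Y, ∀ j, Q.map (Sigma.ι K j) ≫ g = f j := by
  let e := Q.objObjPreimageIso Y
  choose K' s hs t hst using fun j => right_fac (f j ≫ e.inv)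
  simp only [isIso_Q_map_iff_isIso_homologyMap] at hs
  have : IsIso (Q.map (Limits.Sigma.map s)) := (isIso_Q_map_iff_isIso_homologyMap _).2 fun n =>
    isIso_map_colimMap _ _ fun j => hs j.as n
  refine ⟨inv (Q.map (Limits.Sigma.map s)) ≫ Q.map (Sigma.desc t) ≫ e.hom, fun j => ?_⟩
  have h : Q.map (Sigma.ι K j) ≫ inv (Q.map (Limits.Sigma.map s)) =
      inv (Q.map (s j)) ≫ Q.map (Sigma.ι K' j) := by
    rw [IsIso.comp_inv_eq, Category.assoc, IsIso.eq_inv_comp, ← Q.map_comp, ← Q.map_comp,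
      Sigma.ι_map]
  rw [reassoc_of% h, ← Q.map_comp_assoc, Sigma.ι_desc, ← Category.assoc, ← hst, Category.assoc,
    e.inv_hom_id, Category.comp_id]

/-- Cohomology carries the image in the derived category of a coproduct of complexes to a
coproduct. -/
noncomputable def isColimitHomologyQ (F : Discrete J ⥤ CochainComplex C ℤ) (n : ℤ) :
    IsColimit ((homologyFunctor C n).mapCocone (Q.mapCocone (colimit.cocone F))) :=
  have : PreservesColimit F (Q ⋙ homologyFunctor C n) :=
    preservesColimit_of_natIso _ (homologyFunctorFactors C n).symm
  isColimitOfPreserves (Q ⋙ homologyFunctor C n) (colimit.isColimit F)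

lemma homologyMap_Q_sigma_hom_ext (K : J → CochainComplex C ℤ) (n : ℤ) {M : C}
    {f g : (homologyFunctor C n).obj (Q.obj (∐ K)) ⟶ M}
    (h : ∀ j, (homologyFunctor C n).map (Q.map (Sigma.ι K j)) ≫ f =
      (homologyFunctor C n).map (Q.map (Sigma.ι K j)) ≫ g) : f = g :=
  (isColimitHomologyQ (Discrete.functor K) n).hom_ext fun j => h j.as

lemma Q_sigma_hom_ext (K : J → CochainComplex C ℤ) {Y : DerivedCategory C}
    {f g : Q.obj (∐ K) ⟶ Y} (h : ∀ j, Q.map (Sigma.ι K j) ≫ f = Q.map (Sigma.ι K j) ≫ g) :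
    f = g := by
  rw [← sub_eq_zero]
  obtain ⟨W, w, _, hw⟩ := Pretriangulated.distinguished_cocone_triangle₁ (f - g)
  have h0 (j) : Q.map (Sigma.ι K j) ≫ (f - g) = 0 := by rw [Preadditive.comp_sub, h, sub_self]
  have hu (j) : ∃ u, Q.map (Sigma.ι K j) = u ≫ w :=
    Pretriangulated.Triangle.coyoneda_exact₂ _ hw _ (h0 j)
  choose u hu using hu
  obtain ⟨ψ, hψ⟩ := exists_Q_ι_comp_eq K u
  have : IsIso (ψ ≫ w) := (isIso_iff C _).2 fun n => by
    have hid : (homologyFunctor C n).map (ψ ≫ w) = 𝟙 _ :=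
      homologyMap_Q_sigma_hom_ext K n fun j => by
        rw [← Functor.map_comp, reassoc_of% (hψ j), ← hu, Category.comp_id]
    rw [hid]
    infer_instance
  have hwf : w ≫ (f - g) = 0 := Pretriangulated.comp_distTriang_mor_zero₁₂ _ hw
  rw [← cancel_epi (ψ ≫ w), Category.assoc, hwf, comp_zero, comp_zero]

instance preservesColimit_Q (K : J → CochainComplex C ℤ) :
    PreservesColimit (Discrete.functor K) (Q : CochainComplex C ℤ ⥤ DerivedCategory C) :=
  preservesColimit_of_preserves_colimit_cocone (coproductIsCoproduct K)
    ((isColimitMapCoconeCofanMkEquiv _ _ _).symm (Cofan.IsColimit.mk _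
      (fun s => (exists_Q_ι_comp_eq K s.inj).choose)
      (fun s => (exists_Q_ι_comp_eq K s.inj).choose_spec)
      fun s _ hm => Q_sigma_hom_ext K fun j => (hm j).trans
        ((exists_Q_ι_comp_eq K s.inj).choose_spec j).symm))

instance hasCoproductsOfShape_derivedCategory : HasCoproductsOfShape J (DerivedCategory C) where
  has_colimit F := hasColimit_of_iso (objPreimageCompQIso F).symm

instance preservesColimitsOfShape_derivedCategory_homologyFunctor (n : ℤ) :
    PreservesColimitsOfShape (Discrete J) (homologyFunctor C n) where
  preservesColimit {F} :=
    have := preservesColimit_of_preserves_colimit_cocone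
      (isColimitOfPreserves Q (colimit.isColimit
        (Discrete.functor fun j => Q.objPreimage (F.obj ⟨j⟩)))) (isColimitHomologyQ _ n)
    preservesColimit_of_iso_diagram _ (objPreimageCompQIso F)

end Coproducts

section Products

variable [HasProductsOfShape J C] [HasExactLimitsOfShape (Discrete J) C]

lemma exists_comp_Q_π_eq (K : J → CochainComplex C ℤ) {Y : DerivedCategory C}
    (f : ∀ j, Y ⟶ Q.obj (K j)) :
    ∃ g : Y ⟶ Q.obj (∏ᶜ K), ∀ j, g ≫ Q.map (Pi.π K j) = f j := by
  let e := Q.objObjPreimageIso Y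
  choose K' t s hs hts using fun j => left_fac (e.hom ≫ f j)
  simp only [isIso_Q_map_iff_isIso_homologyMap] at hs
  have : IsIso (Q.map (Limits.Pi.map s)) := (isIso_Q_map_iff_isIso_homologyMap _).2 fun n =>
    isIso_map_limMap _ _ fun j => hs j.as n
  refine ⟨e.inv ≫ Q.map (Pi.lift t) ≫ inv (Q.map (Limits.Pi.map s)), fun j => ?_⟩
  have h : inv (Q.map (Limits.Pi.map s)) ≫ Q.map (Pi.π K j) =
      Q.map (Pi.π K' j) ≫ inv (Q.map (s j)) := by
    rw [IsIso.inv_comp_eq, ← Category.assoc, IsIso.eq_comp_inv, ← Q.map_comp, ← Q.map_comp,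
      Limits.Pi.map_π]
  rw [Category.assoc, Category.assoc, h, ← Q.map_comp_assoc, Pi.lift_π, ← hts,
    e.inv_hom_id_assoc]

/-- Cohomology carries the image in the derived category of a product of complexes to a product. -/
noncomputable def isLimitHomologyQ (F : Discrete J ⥤ CochainComplex C ℤ) (n : ℤ) :
    IsLimit ((homologyFunctor C n).mapCone (Q.mapCone (limit.cone F))) :=
  have : PreservesLimit F (Q ⋙ homologyFunctor C n) :=
    preservesLimit_of_natIso _ (homologyFunctorFactors C n).symm
  isLimitOfPreserves (Q ⋙ homologyFunctor C n) (limit.isLimit F)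

lemma homologyMap_Q_pi_hom_ext (K : J → CochainComplex C ℤ) (n : ℤ) {M : C}
    {f g : M ⟶ (homologyFunctor C n).obj (Q.obj (∏ᶜ K))}
    (h : ∀ j, f ≫ (homologyFunctor C n).map (Q.map (Pi.π K j)) =
      g ≫ (homologyFunctor C n).map (Q.map (Pi.π K j))) : f = g :=
  (isLimitHomologyQ (Discrete.functor K) n).hom_ext fun j => h j.as

lemma Q_pi_hom_ext (K : J → CochainComplex C ℤ) {Y : DerivedCategory C}
    {f g : Y ⟶ Q.obj (∏ᶜ K)} (h : ∀ j, f ≫ Q.map (Pi.π K j) = g ≫ Q.map (Pi.π K j)) :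
    f = g := by
  rw [← sub_eq_zero]
  obtain ⟨W, w, _, hw⟩ := Pretriangulated.distinguished_cocone_triangle (f - g)
  have h0 (j) : (f - g) ≫ Q.map (Pi.π K j) = 0 := by rw [Preadditive.sub_comp, h, sub_self]
  have hu (j) : ∃ u, Q.map (Pi.π K j) = w ≫ u :=
    Pretriangulated.Triangle.yoneda_exact₂ _ hw _ (h0 j)
  choose u hu using hu
  obtain ⟨ψ, hψ⟩ := exists_comp_Q_π_eq K u
  have : IsIso (w ≫ ψ) := (isIso_iff C _).2 fun n => by
    have hid : (homologyFunctor C n).map (w ≫ ψ) = 𝟙 _ :=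
      homologyMap_Q_pi_hom_ext K n fun j => by
        rw [← Functor.map_comp, Category.assoc, hψ, ← hu, Category.id_comp]
    rw [hid]
    infer_instance
  have hwf : (f - g) ≫ w = 0 := Pretriangulated.comp_distTriang_mor_zero₁₂ _ hw
  rw [← cancel_mono (w ≫ ψ), ← Category.assoc, hwf, zero_comp, zero_comp]

instance preservesLimit_Q (K : J → CochainComplex C ℤ) :
    PreservesLimit (Discrete.functor K) (Q : CochainComplex C ℤ ⥤ DerivedCategory C) :=
  preservesLimit_of_preserves_limit_cone (productIsProduct K)
    ((isLimitMapConeFanMkEquiv _ _ _).symm (Fan.IsLimit.mk _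
      (fun s => (exists_comp_Q_π_eq K s.proj).choose)
      (fun s => (exists_comp_Q_π_eq K s.proj).choose_spec)
      fun s _ hm => Q_pi_hom_ext K fun j => (hm j).trans
        ((exists_comp_Q_π_eq K s.proj).choose_spec j).symm))

instance hasProductsOfShape_derivedCategory : HasProductsOfShape J (DerivedCategory C) where
  has_limit F := hasLimit_of_iso (objPreimageCompQIso F)

instance preservesLimitsOfShape_derivedCategory_homologyFunctor (n : ℤ) :
    PreservesLimitsOfShape (Discrete J) (homologyFunctor C n) where
  preservesLimit {F} :=
    have := preservesLimit_of_preserves_limit_cone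
      (isLimitOfPreserves Q (limit.isLimit
        (Discrete.functor fun j => Q.objPreimage (F.obj ⟨j⟩)))) (isLimitHomologyQ _ n)
    preservesLimit_of_iso_diagram _ (objPreimageCompQIso F)

end Products

end DerivedCoproducts

section MatrixHom

open DirectSum Function

universe w

variable {R : Type*} [Ring R] {I J : Type*}

/-- The linear map from a direct sum to a product given by a matrix of linear maps. -/
noncomputable def matrixHom [DecidableEq J] {M : J → Type*} {N : I → Type*}
    [∀ j, AddCommGroup (M j)] [∀ j, Module R (M j)] [∀ i, AddCommGroup (N i)]
    [∀ i, Module R (N i)] (a : ∀ j i, M j →ₗ[R] N i) : (⨁ j, M j) →ₗ[R] ∀ i, N i :=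
  toModule R J _ fun j => LinearMap.pi (a j)

section Apply

variable [DecidableEq J] {M : J → Type*} {N : I → Type*}
  [∀ j, AddCommGroup (M j)] [∀ j, Module R (M j)] [∀ i, AddCommGroup (N i)]
  [∀ i, Module R (N i)] (a : ∀ j i, M j →ₗ[R] N i)

@[simp]
lemma matrixHom_lof (j : J) (m : M j) (i : I) : matrixHom a (lof R J M j m) i = a j i m := by
  simp [matrixHom]

lemma matrixHom_apply [∀ j (m : M j), Decidable (m ≠ 0)] (x : ⨁ j, M j) (i : I) :
    matrixHom a x i = ∑ j ∈ x.support, a j i (x j) := by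
  conv_lhs => rw [← sum_support_of x, map_sum, Finset.sum_apply]
  exact Finset.sum_congr rfl fun j _ => matrixHom_lof a j (x j) i

end Apply

lemma bijective_matrixHom_iff_of_diagonal [DecidableEq I] {M : I → Type*}
    [∀ i, AddCommGroup (M i)] [∀ i, Module R (M i)] {a : ∀ j i, M j →ₗ[R] M i}
    (h₀ : ∀ j i, j ≠ i → a j i = 0) (h₁ : ∀ i, a i i = LinearMap.id) :
    Bijective (matrixHom a) ↔ {i | Nontrivial (M i)}.Finite := by
  classical
  have hcoe (x : ⨁ i, M i) : matrixHom a x = x := by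
    ext i
    rw [matrixHom_apply, Finset.sum_eq_single i (fun j _ hj => by rw [h₀ j i hj]; rfl)
      fun hi => by rw [DFinsupp.notMem_support_iff.1 hi, map_zero], h₁, LinearMap.id_apply]
  refine ⟨fun h => ?_, fun h => ⟨fun x y hxy => ?_, fun x => ?_⟩⟩
  · have hM (i) : ∃ m : M i, Nontrivial (M i) → m ≠ 0 := by
      by_cases hi : Nontrivial (M i)
      · exact (exists_ne 0).imp fun _ hm _ => hm
      · exact ⟨0, (absurd · hi)⟩
    choose m hm using hM
    obtain ⟨x, hx⟩ := h.surjective m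
    refine x.support.finite_toSet.subset fun i hi => DFinsupp.mem_support_iff.2 ?_
    rw [← hcoe x, hx]
    exact hm i hi
  · exact DFunLike.coe_injective (by rw [← hcoe, hxy, hcoe])
  · refine ⟨DFinsupp.mk h.toFinset fun i => x i, (hcoe _).trans (funext fun i => ?_)⟩
    by_cases hi : i ∈ h.toFinset
    · exact DFinsupp.mk_of_mem hi
    · rw [Set.Finite.mem_toFinset, Set.mem_ofPred_eq, not_nontrivial_iff_subsingleton] at hi
      exact Subsingleton.elim _ _

section Scalar

variable {K V : Type*} [Field K] [Algebra K R] [AddCommGroup V] [Module K V] [Module R V]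
  [IsScalarTower K R V] [DecidableEq J] (b : Module.Basis J K (I → K))

lemma injective_matrixHom_basis_smul_id :
    Injective (matrixHom fun j i => b j i • (LinearMap.id : V →ₗ[R] V)) := by
  classical
  refine (injective_iff_map_eq_zero _).2 fun x hx => DFinsupp.ext fun j => ?_
  by_contra hj
  refine hj ((Module.forall_dual_apply_eq_zero_iff K _).1 fun f => ?_)
  refine linearIndependent_iff'.1 b.linearIndependent x.support (fun j => f (x j))
    (funext fun i => ?_) j (DFinsupp.mem_support_iff.2 hj)
  have hxi := congr(f ($hx i))
  rw [matrixHom_apply, map_sum, Pi.zero_apply, map_zero] at hxi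
  simpa [mul_comm] using hxi

lemma surjective_matrixHom_basis_smul_id [Module.Finite K V] :
    Surjective (matrixHom fun j i => b j i • (LinearMap.id : V →ₗ[R] V)) := by
  set Φ := matrixHom fun j i => b j i • (LinearMap.id : V →ₗ[R] V)
  have hsmul (ξ : I → K) (v : V) : (fun i => ξ i • v) ∈ LinearMap.range Φ := by
    induction b.mem_span ξ using Submodule.span_induction generalizing v with
    | mem ξ hξ =>
      obtain ⟨j, rfl⟩ := hξ
      exact ⟨lof R J _ j v, funext fun i => by simp [Φ]⟩
    | zero => exact ⟨0, by simp only [map_zero, Pi.zero_apply, zero_smul, Pi.zero_def]⟩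
    | add ξ η _ _ hξ hη =>
      have h := add_mem (hξ v) (hη v)
      simpa only [Pi.add_def, add_smul] using h
    | smul c ξ _ hξ =>
      simpa only [Pi.smul_apply, smul_eq_mul, mul_comm c, mul_smul] using hξ (c • v)
  intro x
  let v := Module.finBasis K V
  have hx : x = ∑ t, fun i => v.repr (x i) t • v t :=
    funext fun i => by rw [Finset.sum_apply, v.sum_repr]
  rw [hx]
  exact sum_mem fun t _ => hsmul _ (v t)

lemma bijective_matrixHom_basis_smul_id [Module.Finite K V] :
    Bijective (matrixHom fun j i => b j i • (LinearMap.id : V →ₗ[R] V)) :=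
  ⟨injective_matrixHom_basis_smul_id b, surjective_matrixHom_basis_smul_id b⟩

end Scalar

lemma isIso_map_sigmaDesc_piLift_iff {I J : Type w} [DecidableEq J] {D : Type*} [Category* D]
    (H : D ⥤ ModuleCat.{w} R) {X : J → D} {Y : I → D} [HasCoproduct X] [HasProduct Y]
    [PreservesColimit (Discrete.functor X) H] [PreservesLimit (Discrete.functor Y) H]
    (a : ∀ j i, X j ⟶ Y i) :
    IsIso (H.map (Sigma.desc fun j => Pi.lift (a j))) ↔
      Bijective (matrixHom fun j i => (H.map (a j i)).hom) := by
  let e := PreservesCoproduct.iso H X ≪≫ ModuleCat.coprodIsoDirectSum _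
  let e' := PreservesProduct.iso H Y ≪≫ ModuleCat.piIsoPi _
  have hι (j) : ModuleCat.ofHom (lof R J (fun j => H.obj (X j)) j) ≫ e.inv =
      H.map (Sigma.ι X j) := by
    rw [Iso.trans_inv, ← Category.assoc, ModuleCat.lof_coprodIsoDirectSum_inv,
      PreservesCoproduct.inv_hom, ι_comp_sigmaComparison]
  have hπ (i) : e'.hom ≫ ModuleCat.ofHom (LinearMap.proj i) = H.map (Pi.π Y i) := by
    rw [Iso.trans_hom, Category.assoc, ModuleCat.piIsoPi_hom_ker_subtype,
      PreservesProduct.iso_hom, piComparison_comp_π]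
  have h : e.inv ≫ H.map (Sigma.desc fun j => Pi.lift (a j)) ≫ e'.hom =
      ModuleCat.ofHom (matrixHom fun j i => (H.map (a j i)).hom) := by
    refine (ModuleCat.coproductCoconeIsColimit _).hom_ext fun ⟨j⟩ =>
      (ModuleCat.productConeIsLimit _).hom_ext fun ⟨i⟩ => ?_
    change (ModuleCat.ofHom (lof R J (fun j => H.obj (X j)) j) ≫ e.inv ≫ _ ≫ e'.hom) ≫
      ModuleCat.ofHom (LinearMap.proj i) = _
    rw [Category.assoc, Category.assoc, Category.assoc, hπ, reassoc_of% hι, ← H.map_comp,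
      ← H.map_comp, Sigma.ι_desc_assoc, Pi.lift_π]
    ext m
    exact (matrixHom_lof (fun j i => (H.map (a j i)).hom) j m i).symm
  rw [← isIso_comp_left_iff e.inv, ← isIso_comp_right_iff _ e'.hom, Category.assoc, h,
    ConcreteCategory.isIso_iff_bijective]
  rfl

end MatrixHom

section LinearHomology

variable {C : Type*} [Category* C] [Abelian C] {K : Type*} [Ring K] [Linear K C]

instance linear_homologicalComplex_homologyFunctor {ι : Type*} (c : ComplexShape ι) (i : ι) :
    (HomologicalComplex.homologyFunctor C c i).Linear K where
  map_smul f a := ShortComplex.homologyMap_smul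
    ((HomologicalComplex.shortComplexFunctor C c i).map f) a

instance linear_derivedCategory_homologyFunctor [HasDerivedCategory C] (n : ℤ) :
    (DerivedCategory.homologyFunctor C n).Linear K :=
  have : Localization.Lifting DerivedCategory.Q
      (HomologicalComplex.quasiIso C (ComplexShape.up ℤ))
      (HomologicalComplex.homologyFunctor C _ n) (DerivedCategory.homologyFunctor C n) :=
    ⟨DerivedCategory.homologyFunctorFactors C n⟩
  (Localization.functor_linear_iff DerivedCategory.Q (HomologicalComplex.quasiIso C _) K
    (HomologicalComplex.homologyFunctor C _ n) _).1 inferInstance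

end LinearHomology

section ProjectiveLift

variable {C : Type*} [Category* C] [Abelian C]

lemma exists_single_homologyMap_eq {ι : Type*} [DecidableEq ι] {c : ComplexShape ι}
    {L : HomologicalComplex C c} {i : ι} {P : C} [Projective P]
    (g : P ⟶ (HomologicalComplex.homologyFunctor C c i).obj L) :
    ∃ f : (HomologicalComplex.single C c i).obj P ⟶ L,
      (HomologicalComplex.homologyFunctorSingleIso C c i).inv.app P ≫
        (HomologicalComplex.homologyFunctor C c i).map f = g := by
  let g' : P ⟶ L.homology i := g
  let z := Projective.factorThru g' (L.homologyπ i)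
  let f := HomologicalComplex.mkHomFromSingle (z ≫ L.iCycles i) fun _ _ => by simp
  have hf : (HomologicalComplex.singleObjCyclesSelfIso c i P).inv ≫
      HomologicalComplex.cyclesMap f i = z := by
    rw [← cancel_mono (L.iCycles i), Category.assoc, HomologicalComplex.cyclesMap_i,
      HomologicalComplex.singleObjCyclesSelfIso_inv_iCycles_assoc,
      HomologicalComplex.mkHomFromSingle_f, Iso.inv_hom_id_assoc]
  refine ⟨f, ?_⟩
  change (HomologicalComplex.singleObjHomologySelfIso c i P).inv ≫
    HomologicalComplex.homologyMap f i = g'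
  rw [← HomologicalComplex.singleObjCyclesSelfIso_inv_homologyπ, Category.assoc,
    HomologicalComplex.homologyπ_naturality, reassoc_of% hf, Projective.factorThru_comp]

variable [HasDerivedCategory C]

open DerivedCategory

/-- The cohomology in degree `n` of `P`, regarded as an object of the derived category placed in
degree `n`. -/
noncomputable def homologyQSingleIso (n : ℤ) (P : C) :
    (homologyFunctor C n).obj (Q.obj ((HomologicalComplex.single C _ n).obj P)) ≅ P :=
  (homologyFunctorFactors C n).app _ ≪≫
    (HomologicalComplex.homologyFunctorSingleIso C _ n).app P

lemma exists_Q_single_homologyMap_eq {n : ℤ} {Y : DerivedCategory C} {P : C} [Projective P]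
    (g : P ⟶ (homologyFunctor C n).obj Y) :
    ∃ f : Q.obj ((HomologicalComplex.single C _ n).obj P) ⟶ Y,
      (homologyQSingleIso n P).inv ≫ (homologyFunctor C n).map f = g := by
  let φ : (homologyFunctor C n).obj Y ≅
      (HomologicalComplex.homologyFunctor C _ n).obj (Q.objPreimage Y) :=
    (homologyFunctor C n).mapIso (Q.objObjPreimageIso Y).symm ≪≫
      (homologyFunctorFactors C n).app _
  obtain ⟨f, hf⟩ := exists_single_homologyMap_eq (g ≫ φ.hom)
  refine ⟨Q.map f ≫ (Q.objObjPreimageIso Y).hom, ?_⟩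
  have hQf : (homologyFunctorFactors C n).inv.app _ ≫ (homologyFunctor C n).map (Q.map f) =
      (HomologicalComplex.homologyFunctor C _ n).map f ≫
        (homologyFunctorFactors C n).inv.app _ :=
    ((homologyFunctorFactors C n).inv.naturality f).symm
  calc (homologyQSingleIso n P).inv ≫ (homologyFunctor C n).map _
    _ = ((HomologicalComplex.homologyFunctorSingleIso C _ n).inv.app P ≫
          (HomologicalComplex.homologyFunctor C _ n).map f) ≫ φ.inv := by
      rw [Functor.map_comp, homologyQSingleIso, Iso.trans_inv, Iso.app_inv, Iso.app_inv,
        Category.assoc, reassoc_of% hQf, Category.assoc]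
      rfl
    _ = g := by rw [hf, Category.assoc, Iso.hom_inv_id, Category.comp_id]

end ProjectiveLift

section Coeffs

open DerivedCategory Function
open scoped ModuleCat.Algebra

variable {A : Type u} [Ring A] [HasDerivedCategory (ModuleCat.{u} A)] {R : Type*} [Ring R]
  (H : DerivedCategory (ModuleCat.{u} A) ⥤ ModuleCat.{u} R)
  [∀ J : Type u, PreservesColimitsOfShape (Discrete J) H]
  [∀ J : Type u, PreservesLimitsOfShape (Discrete J) H]

lemma bijective_matrixHom_map {I J : Type u} [DecidableEq J]
    {X : J → DerivedCategory (ModuleCat.{u} A)} {Y : I → DerivedCategory (ModuleCat.{u} A)}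
    (a : ∀ j i, X j ⟶ Y i)
    (h : ∀ n, Bijective (matrixHom fun j i => ((homologyFunctor _ n).map (a j i)).hom)) :
    Bijective (matrixHom fun j i => (H.map (a j i)).hom) := by
  have : IsIso (Sigma.desc fun j => Pi.lift (a j)) :=
    (isIso_iff _ _).2 fun n => (isIso_map_sigmaDesc_piLift_iff _ a).2 (h n)
  exact (isIso_map_sigmaDesc_piLift_iff H a).1 inferInstance

lemma finite_setOf_nontrivial_map [H.PreservesZeroMorphisms] {I : Type u}
    {X : I → DerivedCategory (ModuleCat.{u} A)}
    (hX : ∀ n, {i | Nontrivial ((homologyFunctor (ModuleCat A) n).obj (X i))}.Finite) :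
    {i | Nontrivial (H.obj (X i))}.Finite := by
  classical
  let a (j i) : X j ⟶ X i := if h : j = i then eqToHom (congrArg X h) else 0
  have h₀ {j i} (h : j ≠ i) : a j i = 0 := dif_neg h
  have h₁ (i) : a i i = 𝟙 _ := dif_pos rfl
  have key (n) := (bijective_matrixHom_iff_of_diagonal
    (a := fun j i => ((homologyFunctor _ n).map (a j i)).hom)
    (fun j i h => by rw [h₀ h, Functor.map_zero]; rfl)
    fun i => by rw [h₁, CategoryTheory.Functor.map_id]; rfl).2 (hX n)
  exact (bijective_matrixHom_iff_of_diagonal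
    (fun j i h => by rw [h₀ h, Functor.map_zero]; rfl)
    fun i => by rw [h₁, CategoryTheory.Functor.map_id]; rfl).1 (bijective_matrixHom_map H a key)

lemma bijective_matrixHom_map_basis_smul_id {K : Type u} [Field K] [Algebra K A] {I J : Type u}
    [DecidableEq J] (b : Module.Basis J K (I → K)) (X : DerivedCategory (ModuleCat.{u} A))
    (hX : ∀ n, Module.Finite K
      ((ModuleCat.restrictScalars (algebraMap K A)).obj ((homologyFunctor _ n).obj X))) :
    Bijective (matrixHom fun j i => (H.map (b j i • 𝟙 X)).hom) := by
  refine bijective_matrixHom_map H _ fun n => ?_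
  have : Module.Finite K ((homologyFunctor (ModuleCat.{u} A) n).obj X) := hX n
  convert bijective_matrixHom_basis_smul_id (R := A)
    (V := (homologyFunctor (ModuleCat.{u} A) n).obj X) b with j i
  rw [Functor.map_smul, CategoryTheory.Functor.map_id]
  rfl

end Coeffs

section Finite

open DerivedCategory

variable {B : Type u} [Ring B] [HasDerivedCategory (ModuleCat.{u} B)]

/-- Elements of `H^n(F X)` are images of the generator of a shifted copy of `B`, so that natural
transformations act on them by scalars. -/
lemma exists_homologyMap_app_eq_smul {D : Type*} [Category* D]
    {F : D ⥤ DerivedCategory (ModuleCat.{u} B)} [F.Full] [F.EssSurj] (α : F ⟶ F) (n : ℤ) {X : D}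
    (y : (homologyFunctor (ModuleCat B) n).obj (F.obj X)) :
    ∃ r : B, (homologyFunctor (ModuleCat B) n).map (α.app X) y = r • y := by
  let P := Q.obj ((HomologicalComplex.single _ _ n).obj (ModuleCat.of B B))
  let ε : F.obj (F.objPreimage P) ≅ P := F.objObjPreimageIso P
  let e := homologyQSingleIso n (ModuleCat.of B B)
  let H := homologyFunctor (ModuleCat B) n
  obtain ⟨f, hf⟩ := exists_Q_single_homologyMap_eq
    (ModuleCat.ofHom (LinearMap.toSpanSingleton B _ y))
  let β : P ⟶ P := ε.inv ≫ α.app _ ≫ ε.hom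
  have hβ : f ≫ α.app X = β ≫ f := by
    have hα := α.naturality (F.preimage (ε.hom ≫ f))
    rw [F.map_preimage] at hα
    rw [← cancel_epi ε.hom, ← Category.assoc, hα]
    simp [β]
  have hy : H.map f (e.inv (1 : B)) = y := congr($hf (1 : B)).trans (one_smul B y)
  let r : B := e.hom (H.map β (e.inv (1 : B)))
  have hr : H.map β (e.inv (1 : B)) = r • e.inv (1 : B) := by
    have hrr : r = r • (1 : B) := (mul_one r).symm
    rw [← map_smul, ← hrr, Iso.hom_inv_id_apply]
  refine ⟨r, ?_⟩
  calc H.map (α.app X) y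
    _ = H.map (f ≫ α.app X) (e.inv (1 : B)) := by
      rw [H.map_comp, ConcreteCategory.comp_apply, hy]
    _ = H.map f (H.map β (e.inv (1 : B))) := by
      rw [hβ, H.map_comp, ConcreteCategory.comp_apply]
    _ = r • y := by rw [hr, map_smul, hy]

theorem finite_homology_obj_of_isEquivalence {A : Type u} [Ring A]
    [HasDerivedCategory (ModuleCat.{u} A)] {K : Type u} [Field K] [Algebra K A]
    (F : DerivedCategory (ModuleCat.{u} A) ⥤ DerivedCategory (ModuleCat.{u} B))
    [F.IsEquivalence] (n : ℤ) (X : DerivedCategory (ModuleCat.{u} A))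
    (hX : ∀ n, Module.Finite K
      ((ModuleCat.restrictScalars (algebraMap K A)).obj ((homologyFunctor _ n).obj X))) :
    Module.Finite B ((homologyFunctor (ModuleCat B) n).obj (F.obj X)) := by
  classical
  let I : Type u := (homologyFunctor (ModuleCat B) n).obj (F.obj X)
  let b := Module.Basis.ofVectorSpace K (I → K)
  obtain ⟨x, hx⟩ := (bijective_matrixHom_map_basis_smul_id
    (F ⋙ homologyFunctor (ModuleCat B) n) b X hX).surjective fun i : I => i
  refine ⟨⟨x.support.image x, eq_top_iff.2 fun y _ => ?_⟩⟩
  have hy : y = _ := (congrFun hx y).symm.trans (matrixHom_apply _ x y)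
  rw [hy]
  refine Submodule.sum_mem _ fun j hj => ?_
  obtain ⟨r, hr⟩ := exists_homologyMap_app_eq_smul
    (Functor.whiskerRight (Linear.toCatCenter K _ (b j y)) F) n (x j)
  change (homologyFunctor _ n).map (F.map (b j y • 𝟙 X)) (x j) = r • x j at hr
  change (homologyFunctor _ n).map (F.map (b j y • 𝟙 X)) (x j) ∈ _
  rw [hr]
  exact Submodule.smul_mem _ _ (Submodule.subset_span
    (Finset.mem_coe.2 (Finset.mem_image_of_mem x hj)))

end Finite

section Length

open ShortComplex

variable {A B : Type u} [Ring A] [Ring B]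

lemma length_le_add_of_exact {S : ShortComplex (ModuleCat.{u} A)} (hS : S.Exact) :
    Module.length A S.X₂ ≤ Module.length A S.X₁ + Module.length A S.X₃ := by
  let f := S.f.hom
  let g := S.g.hom
  have hfg : Function.Exact f g := (ShortExact.moduleCat_exact_iff_function_exact S).1 hS
  have hfg' : Function.Exact f.range.subtype g.rangeRestrict := LinearMap.exact_iff.2 <| by
    rw [LinearMap.ker_rangeRestrict, hfg.linearMap_ker_eq, Submodule.range_subtype]
  calc Module.length A S.X₂
    _ = Module.length A f.range + Module.length A g.range :=
      Module.length_eq_add_of_exact _ _ f.range.injective_subtype g.surjective_rangeRestrict hfg'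
    _ ≤ Module.length A S.X₁ + Module.length A S.X₃ :=
      add_le_add (Module.length_le_of_surjective _ f.surjective_rangeRestrict)
        (Module.length_le_of_injective _ g.range.injective_subtype)

lemma length_eq_zero_iff_isZero {M : ModuleCat.{u} A} : Module.length A M = 0 ↔ IsZero M :=
  Module.length_eq_zero_iff.trans ModuleCat.isZero_iff_subsingleton.symm

lemma length_obj_le_mul_length (G : ModuleCat.{u} A ⥤ ModuleCat.{u} B)
    [G.PreservesZeroMorphisms]
    (hG : ∀ S : ShortComplex (ModuleCat.{u} A), S.ShortExact → (S.map G).Exact) {c : ℕ∞}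
    (hc : ∀ S : ModuleCat.{u} A, IsSimpleModule A S → Module.length B (G.obj S) ≤ c)
    {M : Type u} [AddCommGroup M] [Module A M] (hM : IsFiniteLength A M) :
    Module.length B (G.obj (ModuleCat.of A M)) ≤ c * Module.length A M := by
  induction hM with
  | of_subsingleton =>
    rw [length_eq_zero_iff_isZero.2 (G.map_isZero (ModuleCat.isZero_of_subsingleton _))]
    exact zero_le
  | @of_simple_quotient M _ _ N hN _ ih =>
    let e : N.mkQ.ker ≃ₗ[A] N := LinearEquiv.ofEq _ _ N.ker_mkQ
    calc Module.length B (G.obj (ModuleCat.of A M))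
      _ ≤ Module.length B (G.obj (ModuleCat.of A N.mkQ.ker)) +
          Module.length B (G.obj (ModuleCat.of A (M ⧸ N))) :=
        length_le_add_of_exact (hG _ (LinearMap.shortExact_shortComplexKer N.mkQ_surjective))
      _ ≤ c * Module.length A N + c := by
        rw [(G.mapIso e.toModuleIso).toLinearEquiv.length_eq]
        exact add_le_add ih (hc _ hN)
      _ = c * Module.length A M := by
        rw [Module.length_eq_add_of_exact _ _ N.injective_subtype N.mkQ_surjective
          (LinearMap.exact_subtype_mkQ N), Module.length_eq_one_iff.2 hN, mul_add, mul_one]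

lemma nonempty_retract_quotient_jacobson [IsArtinianRing A] {S : Type u} [AddCommGroup S]
    [Module A S] [IsSimpleModule A S] :
    Nonempty (Retract (ModuleCat.of A S) (ModuleCat.of A (A ⧸ Module.jacobson A A))) := by
  have : IsSemisimpleModule A (A ⧸ Module.jacobson A A) :=
    (IsArtinian.isSemisimpleModule_iff_jacobson _ _).2 (Module.jacobson_quotient_jacobson A A)
  obtain ⟨x, hx⟩ := @exists_ne S (IsSimpleModule.nontrivial A S) 0
  let f := LinearMap.toSpanSingleton A S x
  have hf : Module.jacobson A A ≤ f.ker := by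
    have h := Module.le_comap_jacobson f
    rwa [IsSimpleModule.jacobson_eq_bot A S] at h
  have hf' : Function.Surjective ((Module.jacobson A A).liftQ f hf) :=
    Function.Surjective.of_comp (g := Submodule.mkQ _)
      (IsSimpleModule.toSpanSingleton_surjective A hx)
  obtain ⟨s, hs⟩ := IsSemisimpleModule.lifting_property _ hf' LinearMap.id
  exact ⟨⟨ModuleCat.ofHom s, ModuleCat.ofHom _, ModuleCat.hom_ext hs⟩⟩

lemma length_obj_le_of_retract {C : Type*} [Category* C] (G : C ⥤ ModuleCat.{u} B) {X Y : C}
    (r : Retract X Y) : Module.length B (G.obj X) ≤ Module.length B (G.obj Y) :=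
  Module.length_le_of_injective (G.map r.i).hom
    ((ModuleCat.mono_iff_injective _).1 inferInstance)

end Length

section HomologyLength

open DerivedCategory

variable {A : Type u} [Ring A] [HasDerivedCategory (ModuleCat.{u} A)]

/-- The length of the `A`-module `H^i(X)`. -/
noncomputable def homologyLength (X : DerivedCategory (ModuleCat.{u} A)) (i : ℤ) : ℕ∞ :=
  Module.length A ((homologyFunctor (ModuleCat A) i).obj X)

lemma homologyLength_eq_zero_iff {X : DerivedCategory (ModuleCat.{u} A)} {i : ℤ} :
    homologyLength X i = 0 ↔ IsZero ((homologyFunctor _ i).obj X) :=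
  length_eq_zero_iff_isZero

lemma homologyLength_congr {X Y : DerivedCategory (ModuleCat.{u} A)} (e : X ≅ Y) (i : ℤ) :
    homologyLength X i = homologyLength Y i :=
  ((homologyFunctor _ i).mapIso e).toLinearEquiv.length_eq

lemma homologyLength_shift (X : DerivedCategory (ModuleCat.{u} A)) (n i : ℤ) :
    homologyLength (X⟦n⟧) i = homologyLength X (n + i) :=
  (((homologyFunctor (ModuleCat A) 0).shiftIso n i _ rfl).app X).toLinearEquiv.length_eq

lemma homologyLength_singleFunctor (M : ModuleCat.{u} A) (i : ℤ) :
    homologyLength ((singleFunctor _ i).obj M) i = Module.length A M :=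
  ((singleFunctorCompHomologyFunctorIso _ i).app M).toLinearEquiv.length_eq

lemma isZero_of_homologyLength_eq_zero {X : DerivedCategory (ModuleCat.{u} A)}
    (h : ∀ i, homologyLength X i = 0) : IsZero X :=
  have : IsIso (0 : X ⟶ X) := (isIso_iff _ _).2 fun i =>
    have hi := homologyLength_eq_zero_iff.1 (h i)
    isIso_of_source_target_iso_zero _ hi.isoZero hi.isoZero
  ((isIsoZero_iff_source_target_isZero X X).1 this).1

section Truncation

variable {X Y Z : DerivedCategory (ModuleCat.{u} A)} {f : X ⟶ Y} {g : Y ⟶ Z} {h : Z ⟶ X⟦(1 : ℤ)⟧}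
  (hT : Pretriangulated.Triangle.mk f g h ∈ Pretriangulated.distinguishedTriangles)
  (a : ℤ) [X.IsLE a] [Z.IsGE (a + 1)]
include hT a

lemma homologyLength_left_le_middle (i : ℤ) : homologyLength X i ≤ homologyLength Y i := by
  rcases lt_or_ge a i with hi | hi
  · rw [homologyLength_eq_zero_iff.2 (isZero_of_isLE _ a i hi)]
    exact zero_le
  · have hi' : homologyLength X i ≤ homologyLength Z (i - 1) + homologyLength Y i :=
      length_le_add_of_exact (HomologySequence.exact₁ _ hT (i - 1) i)
    rwa [homologyLength_eq_zero_iff.2 (isZero_of_isGE Z (a + 1) (i - 1) (by lia)),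
      zero_add] at hi'

lemma homologyLength_right_le_middle (i : ℤ) : homologyLength Z i ≤ homologyLength Y i := by
  rcases lt_or_ge i (a + 1) with hi | hi
  · rw [homologyLength_eq_zero_iff.2 (isZero_of_isGE _ (a + 1) i hi)]
    exact zero_le
  · have hi' : homologyLength Z i ≤ homologyLength Y i + homologyLength X (i + 1) :=
      length_le_add_of_exact (HomologySequence.exact₃ _ hT i (i + 1))
    rwa [homologyLength_eq_zero_iff.2 (isZero_of_isLE X a (i + 1) (by lia)),
      add_zero] at hi'

end Truncation

end HomologyLength

section HomologicalFunctor

open DerivedCategory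

variable {A B : Type u} [Ring A] [HasDerivedCategory (ModuleCat.{u} A)] [Ring B]
  (H : DerivedCategory (ModuleCat.{u} A) ⥤ ModuleCat.{u} B) [H.IsHomological]

lemma exact_map_singleFunctor_comp {S : ShortComplex (ModuleCat.{u} A)} (hS : S.ShortExact)
    (i : ℤ) : (S.map (singleFunctor _ i ⋙ H)).Exact := by
  have hT := triangleOfSES_distinguished (hS.map_of_exact (HomologicalComplex.single _ _ i))
  let e : singleFunctor (ModuleCat.{u} A) i ⋙ H ≅ HomologicalComplex.single _ _ i ⋙ Q ⋙ H :=
    Functor.isoWhiskerRight (singleFunctorIsoCompQ _ i) H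
  exact (ShortComplex.exact_iff_of_iso (S.mapNatIso e)).2 (H.map_distinguished_exact _ hT)

lemma length_obj_le_of_isGE_of_isLE {c : ℕ∞} {i : ℤ}
    (hc : ∀ S : ModuleCat.{u} A, IsSimpleModule A S →
      Module.length B (H.obj ((singleFunctor _ i).obj S)) ≤ c)
    (X : DerivedCategory (ModuleCat.{u} A)) [X.IsGE i] [X.IsLE i] (hX : homologyLength X i ≠ ⊤) :
    Module.length B (H.obj X) ≤ c * homologyLength X i := by
  obtain ⟨M, ⟨e⟩⟩ := exists_iso_singleFunctor_obj_of_isGE_of_isLE X i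
  rw [homologyLength_congr e, homologyLength_singleFunctor] at hX ⊢
  rw [(H.mapIso e).toLinearEquiv.length_eq]
  exact length_obj_le_mul_length (singleFunctor _ i ⋙ H)
    (fun S hS => exact_map_singleFunctor_comp H hS i) hc (Module.length_ne_top_iff.1 hX)

/-- Induction on the support of the cohomology, truncating in its lowest degree. -/
lemma length_obj_le_sum {c : ℤ → ℕ∞}
    (hc : ∀ (S : ModuleCat.{u} A) (i : ℤ), IsSimpleModule A S →
      Module.length B (H.obj ((singleFunctor _ i).obj S)) ≤ c i)
    (s : Finset ℤ) (X : DerivedCategory (ModuleCat.{u} A)) (hX : ∀ i, homologyLength X i ≠ ⊤)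
    (hs : ∀ i ∉ s, homologyLength X i = 0) :
    Module.length B (H.obj X) ≤ ∑ i ∈ s, c i * homologyLength X i := by
  induction s using Finset.induction_on_min generalizing X with
  | empty =>
    rw [length_eq_zero_iff_isZero.2 (H.map_isZero
      (isZero_of_homologyLength_eq_zero fun i => hs i (Finset.notMem_empty i)))]
    exact zero_le
  | insert a s ha ih =>
    obtain ⟨X₁, X₃, hX₁, hX₃, f, g, h, hT⟩ := TStructure.t.exists_triangle X a (a + 1) rfl
    have : X₁.IsLE a := ⟨hX₁⟩
    have : X₃.IsGE (a + 1) := ⟨hX₃⟩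
    have h₁ := homologyLength_left_le_middle hT a
    have h₃ := homologyLength_right_le_middle hT a
    have has : a ∉ s := fun h => (ha a h).false
    have hX₁ : X₁.IsGE a := (isGE_iff _ _).2 fun i hi => homologyLength_eq_zero_iff.1 <|
      nonpos_iff_eq_zero.1 <| (h₁ i).trans_eq <| hs i <| by
        rw [Finset.mem_insert]
        rintro (rfl | h)
        exacts [hi.false, hi.not_gt (ha i h)]
    have hX₃ (i) (hi : i ∉ s) : homologyLength X₃ i = 0 := by
      rcases lt_or_ge i (a + 1) with hia | hia
      · exact homologyLength_eq_zero_iff.2 (isZero_of_isGE _ (a + 1) i hia)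
      · exact nonpos_iff_eq_zero.1 <| (h₃ i).trans_eq <| hs i <| by
          rw [Finset.mem_insert]
          rintro (rfl | h)
          exacts [by lia, hi h]
    calc Module.length B (H.obj X)
      _ ≤ Module.length B (H.obj X₁) + Module.length B (H.obj X₃) :=
        length_le_add_of_exact (H.map_distinguished_exact _ hT)
      _ ≤ c a * homologyLength X₁ a + ∑ i ∈ s, c i * homologyLength X₃ i :=
        add_le_add (length_obj_le_of_isGE_of_isLE H (fun S => hc S a) X₁
          (ne_top_of_le_ne_top (hX a) (h₁ a)))
          (ih X₃ (fun i => ne_top_of_le_ne_top (hX i) (h₃ i)) hX₃)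
      _ ≤ c a * homologyLength X a + ∑ i ∈ s, c i * homologyLength X i := by
        gcongr with i
        exacts [h₁ a, h₃ i]
      _ = ∑ i ∈ insert a s, c i * homologyLength X i := by
        rw [Finset.sum_insert has]

end HomologicalFunctor

section Equivalence

open DerivedCategory

lemma isZero_homologyFunctor_obj_singleFunctor_obj {C : Type*} [Category* C] [Abelian C]
    [HasDerivedCategory C] (M : C) {i n : ℤ} (h : n ≠ i) :
    IsZero ((homologyFunctor C n).obj ((singleFunctor C i).obj M)) := by
  rcases lt_or_gt_of_ne h with h | h
  · exact isZero_of_isGE _ i n h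
  · exact isZero_of_isLE _ i n h

lemma finite_restrictScalars_of (K A M : Type*) [CommRing K] [Ring A] [Algebra K A]
    [AddCommGroup M] [Module A M] [Module K M] [IsScalarTower K A M] [Module.Finite K M] :
    Module.Finite K ((ModuleCat.restrictScalars (algebraMap K A)).obj (ModuleCat.of A M)) :=
  Module.Finite.equiv
    { AddEquiv.refl M with map_smul' := fun c x => (algebraMap_smul A c x).symm }

variable (K : Type u) [Field K] {A B : Type u} [Ring A] [Algebra K A]
  [HasDerivedCategory (ModuleCat.{u} A)] [Ring B] [IsArtinianRing B]
  [HasDerivedCategory (ModuleCat.{u} B)]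
  (F : DerivedCategory (ModuleCat.{u} A) ⥤ DerivedCategory (ModuleCat.{u} B)) [F.IsEquivalence]

lemma homologyLength_obj_singleFunctor_ne_top (M : ModuleCat.{u} A)
    [Module.Finite K ((ModuleCat.restrictScalars (algebraMap K A)).obj M)] (i : ℤ) :
    homologyLength (F.obj ((singleFunctor _ i).obj M)) 0 ≠ ⊤ := by
  have := finite_homology_obj_of_isEquivalence (K := K) F 0 ((singleFunctor _ i).obj M) fun n => by
    rcases eq_or_ne n i with rfl | h
    · let e : M ≅ (homologyFunctor _ n).obj ((singleFunctor _ n).obj M) :=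
        ((singleFunctorCompHomologyFunctorIso _ n).app M).symm
      exact Module.Finite.equiv
        ((ModuleCat.restrictScalars (algebraMap K A)).mapIso e).toLinearEquiv
    · have := ModuleCat.isZero_iff_subsingleton.1
        ((ModuleCat.restrictScalars (algebraMap K A)).map_isZero
          (isZero_homologyFunctor_obj_singleFunctor_obj M h))
      infer_instance
  exact Module.length_ne_top

lemma exists_homologyLength_obj_singleFunctor_eq [F.PreservesZeroMorphisms] (M : ModuleCat.{u} A)
    [Module.Finite K ((ModuleCat.restrictScalars (algebraMap K A)).obj M)] :
    ∃ C : ℤ →₀ ℕ, ∀ i, homologyLength (F.obj ((singleFunctor _ i).obj M)) 0 = C i := by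
  have h := finite_setOf_nontrivial_map (F ⋙ homologyFunctor (ModuleCat B) 0)
    (X := fun i : ULift.{u} ℤ => (singleFunctor _ i.down).obj M) fun n =>
      (Set.finite_singleton (ULift.up n)).subset fun i hi => by
        by_contra hne
        refine not_subsingleton_iff_nontrivial.2 hi (ModuleCat.isZero_iff_subsingleton.1
          (isZero_homologyFunctor_obj_singleFunctor_obj M fun h => hne ?_))
        exact ULift.ext _ _ h.symm
  refine ⟨Finsupp.onFinset (h.toFinset.image ULift.down)
    (fun i => (homologyLength (F.obj ((singleFunctor _ i).obj M)) 0).toNat) fun i hi => ?_,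
    fun i => (ENat.natCast_toNat (homologyLength_obj_singleFunctor_ne_top K F M i)).symm⟩
  refine Finset.mem_image.2 ⟨ULift.up i, h.mem_toFinset.2 ?_, rfl⟩
  by_contra hs
  have hi' : homologyLength (F.obj ((singleFunctor _ i).obj M)) 0 = 0 :=
    Module.length_eq_zero_iff.2 (not_nontrivial_iff_subsingleton.1 hs)
  exact hi (by rw [hi', ENat.toNat_zero])

/-- Every simple module is a retract of the semisimple quotient of `A`, so the bounds for that
single module serve for all simple modules, hence for all bounded complexes. -/
theorem exists_homologyLength_obj_le [FiniteDimensional K A] [F.CommShift ℤ] [F.IsTriangulated] :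
    ∃ C : ℤ →₀ ℕ, ∀ X, Bdd A X → (∀ i, homologyLength X i ≠ ⊤) → ∀ n,
      homologyLength (F.obj X) n ≤ C.sum fun i c => c * homologyLength X (n + i) := by
  have : IsArtinianRing A := .of_finite K A
  have : Module.Finite K ((ModuleCat.restrictScalars (algebraMap K A)).obj
      (ModuleCat.of A (A ⧸ Module.jacobson A A))) := finite_restrictScalars_of K A _
  obtain ⟨C, hC⟩ := exists_homologyLength_obj_singleFunctor_eq K F
    (ModuleCat.of A (A ⧸ Module.jacobson A A))
  refine ⟨C, fun X ⟨a, b, hab⟩ hX n => ?_⟩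
  have hsimple (S : ModuleCat.{u} A) (i : ℤ) (hS : IsSimpleModule A S) :
      homologyLength (F.obj ((singleFunctor _ i).obj S)) 0 ≤ C i := by
    obtain ⟨r⟩ := nonempty_retract_quotient_jacobson (A := A) (S := S)
    exact (hC i).le.trans' (length_obj_le_of_retract
      (singleFunctor _ i ⋙ F ⋙ homologyFunctor (ModuleCat B) 0) r)
  let e : F.obj (X⟦n⟧) ≅ (F.obj X)⟦n⟧ := (F.commShiftIso n).app X
  calc homologyLength (F.obj X) n
    _ = homologyLength (F.obj (X⟦n⟧)) 0 := by
      rw [homologyLength_congr e, homologyLength_shift, add_zero]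
    _ ≤ ∑ i ∈ Finset.Icc (a - n) (b - n), C i * homologyLength (X⟦n⟧) i :=
      length_obj_le_sum (F ⋙ homologyFunctor (ModuleCat B) 0) hsimple _ _
        (fun i => by rw [homologyLength_shift]; exact hX _) fun i hi => by
          rw [homologyLength_shift]
          refine homologyLength_eq_zero_iff.2 (hab _ ?_)
          rw [Finset.mem_Icc] at hi
          lia
    _ ≤ ∑ i ∈ C.support, C i * homologyLength X (n + i) := by
      simp only [homologyLength_shift]
      refine Finset.sum_le_sum_of_ne_zero fun i _ hi => Finsupp.mem_support_iff.2 fun h => hi ?_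
      rw [h, Nat.cast_zero, zero_mul]

end Equivalence

section Dimension

open scoped ModuleCat.Algebra

variable (K : Type u) [Field K] {A : Type u} [Ring A] [Algebra K A]

lemma length_restrictScalars_le {M : Type u} [AddCommGroup M] [Module A M]
    (hM : IsFiniteLength A M) :
    Module.length K ((ModuleCat.restrictScalars (algebraMap K A)).obj (ModuleCat.of A M)) ≤
      Module.length K A * Module.length A M := by
  let G := ModuleCat.restrictScalars (algebraMap K A)
  refine length_obj_le_mul_length G (fun S hS => ?_) (fun S hS => ?_) hM
  · have h := (ShortComplex.ShortExact.moduleCat_exact_iff_function_exact S).1 hS.exact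
    exact (ShortComplex.ShortExact.moduleCat_exact_iff_function_exact (S.map G)).2 h
  · obtain ⟨x, hx⟩ := @exists_ne S (IsSimpleModule.nontrivial A S) 0
    let f : A →ₗ[K] S := (LinearMap.toSpanSingleton A S x).restrictScalars K
    exact Module.length_le_of_surjective f
      (@IsSimpleModule.toSpanSingleton_surjective A _ S _ _ hS x hx)

lemma length_le_length_restrictScalars (M : ModuleCat.{u} A) :
    Module.length A M ≤
      Module.length K ((ModuleCat.restrictScalars (algebraMap K A)).obj M) := by
  have h := Submodule.length_le_length_restrictScalars K (⊤ : Submodule A M)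
  rwa [Submodule.restrictScalars_top, Module.length_top, Module.length_top] at h

variable [HasDerivedCategory (ModuleCat.{u} A)]

lemma homologyLength_le_hdim {X : DerivedCategory (ModuleCat.{u} A)} (hX : FinCoh K A X)
    (i : ℤ) : homologyLength X i ≤ hdim K A i X :=
  have : Module.Finite K
      ((ModuleCat.restrictScalars (algebraMap K A)).obj (Hobj A i X)) := hX i
  (length_le_length_restrictScalars K (Hobj A i X)).trans_eq (Module.length_eq_finrank K _)

variable (L : Type u) [Field L] {B : Type u} [Ring B] [Algebra L B]
  [HasDerivedCategory (ModuleCat.{u} B)]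
  (F : DerivedCategory (ModuleCat.{u} A) ⥤ DerivedCategory (ModuleCat.{u} B))

/-- `C` is a dimension profile of `F` if the cohomology of `F.obj X` is dominated by the
convolution of that of `X` with `C`. The left-hand side is a length rather than a `finrank` so
that the bound also asserts finite dimensionality. -/
def IsDimensionProfile (C : ℤ →₀ ℕ) : Prop :=
  ∀ X, InDb K A X → ∀ n,
    Module.length L ((ModuleCat.restrictScalars (algebraMap L B)).obj (Hobj B n (F.obj X))) ≤
      (C.sum fun i c => c * hdim K A (n + i) X : ℕ)

theorem exists_isDimensionProfile [FiniteDimensional K A] [FiniteDimensional L B]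
    [F.CommShift ℤ] [F.IsTriangulated] [F.IsEquivalence] :
    ∃ C, IsDimensionProfile K L F C := by
  have : IsArtinianRing B := .of_finite L B
  obtain ⟨C, hC⟩ := exists_homologyLength_obj_le K F
  refine ⟨Module.finrank L B • C, fun X ⟨hX, hX'⟩ n => ?_⟩
  have hlen : homologyLength (F.obj X) n ≤ (C.sum fun i c => c * hdim K A (n + i) X : ℕ) :=
    calc homologyLength (F.obj X) n
      _ ≤ C.sum fun i c => c * homologyLength X (n + i) :=
        hC X hX
          (fun i => ne_top_of_le_ne_top (ENat.natCast_ne_top _) (homologyLength_le_hdim K hX' i)) n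
      _ ≤ C.sum fun i c => c * (hdim K A (n + i) X : ℕ∞) :=
        Finset.sum_le_sum fun i _ => mul_le_mul_right (homologyLength_le_hdim K hX' _) _
      _ = _ := by simp [Finsupp.sum]
  calc Module.length L ((ModuleCat.restrictScalars (algebraMap L B)).obj (Hobj B n (F.obj X)))
    _ ≤ Module.length L B * homologyLength (F.obj X) n :=
      length_restrictScalars_le L
        (Module.length_ne_top_iff.1 (ne_top_of_le_ne_top (ENat.natCast_ne_top _) hlen))
    _ ≤ Module.finrank L B * (C.sum fun i c => c * hdim K A (n + i) X : ℕ) := by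
      rw [Module.length_eq_finrank]
      gcongr
    _ = _ := by
      rw [Finsupp.sum_smul_index fun _ => zero_mul _, ← Nat.cast_mul, Finsupp.mul_sum]
      simp only [mul_assoc]

end Dimension

section CohomologicalInvariants

open DerivedCategory

variable {K : Type u} [Field K] {A : Type u} [Ring A] [Algebra K A]
  [HasDerivedCategory (ModuleCat.{u} A)] {X Y : DerivedCategory (ModuleCat.{u} A)}

lemma hdim_eq_zero_of_isZero {i : ℤ} (h : IsZero (Hobj A i X)) : hdim K A i X = 0 :=
  have := ModuleCat.isZero_iff_subsingleton.1
    ((ModuleCat.restrictScalars (algebraMap K A)).map_isZero h)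
  Module.finrank_zero_of_subsingleton

lemma isZero_of_hdim_eq_zero (hX : FinCoh K A X) {i : ℤ} (h : hdim K A i X = 0) :
    IsZero (Hobj A i X) :=
  homologyLength_eq_zero_iff.1 <| nonpos_iff_eq_zero.1 <|
    (homologyLength_le_hdim K hX i).trans_eq <| by rw [h, Nat.cast_zero]

lemma hl_congr (e : X ≅ Y) : hl K A X = hl K A Y := by
  have h (i) : hdim K A i X = hdim K A i Y :=
    ((ModuleCat.restrictScalars (algebraMap K A)).mapIso
      ((homologyFunctor _ i).mapIso e)).toLinearEquiv.finrank_eq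
  simp only [hl, h]

lemma hw_congr (e : X ≅ Y) : hw A X = hw A Y := by
  have h (i) : IsZero (Hobj A i X) ↔ IsZero (Hobj A i Y) :=
    ((homologyFunctor (ModuleCat A) i).mapIso e).isZero_iff
  simp only [hw, h]

lemma hdim_le_hl (hX : Bdd A X) (i : ℤ) : hdim K A i X ≤ hl K A X := by
  obtain ⟨a, b, hab⟩ := hX
  have hfin : (Set.range fun i => hdim K A i X).Finite :=
    (((Set.finite_Icc a b).image fun i => hdim K A i X).insert 0).subset <| by
      rintro _ ⟨i, rfl⟩
      by_cases hi : i ∈ Set.Icc a b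
      · exact .inr ⟨i, hi, rfl⟩
      · exact .inl (hdim_eq_zero_of_isZero (hab i (by rw [Set.mem_Icc] at hi; lia)))
  exact le_csSup hfin.bddAbove ⟨i, rfl⟩

lemma le_hw (hX : Bdd A X) {i j : ℤ} (hi : ¬ IsZero (Hobj A i X)) (hj : ¬ IsZero (Hobj A j X)) :
    j - i + 1 ≤ hw A X := by
  obtain ⟨a, b, hab⟩ := hX
  have hbdd : BddAbove {n : ℕ | ∃ i j : ℤ, ¬ IsZero (Hobj A i X) ∧ ¬ IsZero (Hobj A j X) ∧
      (n : ℤ) = j - i + 1} := by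
    refine ⟨(b - a + 1).toNat, ?_⟩
    rintro n ⟨i, j, hi, hj, hn⟩
    have hai := mt (hab i) hi
    have hjb := mt (hab j) hj
    lia
  rcases lt_or_ge (j - i + 1) 0 with hneg | hnonneg
  · lia
  · have := le_csSup hbdd ⟨i, j, hi, hj, Int.toNat_of_nonneg hnonneg⟩
    exact Int.toNat_le.1 this

lemma Indec.one_le_hw (h : Indec X) (hX : Bdd A X) : 1 ≤ hw A X := by
  obtain ⟨i, hi⟩ : ∃ i, ¬ IsZero (Hobj A i X) := by
    by_contra! hi
    exact h.1 (isZero_of_homologyLength_eq_zero fun i => homologyLength_eq_zero_iff.2 (hi i))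
  have := le_hw hX hi hi
  lia

lemma Indec.map {C D : Type*} [Category* C] [HasZeroMorphisms C] [Category* D]
    [HasZeroMorphisms D] (F : C ⥤ D) [F.Full] [F.Faithful] [F.PreservesZeroMorphisms] {X : C}
    (h : Indec X) : Indec (F.obj X) := by
  refine ⟨fun h₀ => h.1 ?_, fun e he => ?_⟩
  · rw [IsZero.iff_id_eq_zero] at h₀ ⊢
    exact F.map_injective (by rw [F.map_id, h₀, F.map_zero])
  · obtain ⟨e, rfl⟩ := F.map_surjective e
    refine (h.2 e (F.map_injective (by rw [F.map_comp, he]))).imp ?_ ?_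
    · rintro rfl
      exact F.map_zero _ _
    · rintro rfl
      exact F.map_id _

lemma hr_le_glhr (hX : Indec X ∧ InDb K A X) : (hr K A X : ℕ∞) ≤ glhr K A :=
  le_iSup_of_le ⟨X, hX⟩ le_rfl

lemma hl_le_glhl (hX : Indec X ∧ InDb K A X) : (hl K A X : ℕ∞) ≤ glhl K A :=
  le_iSup_of_le ⟨X, hX⟩ le_rfl

lemma hw_le_glhw (hX : Indec X ∧ InDb K A X) : (hw A X : ℕ∞) ≤ glhw K A :=
  le_iSup_of_le ⟨X, hX⟩ le_rfl

end CohomologicalInvariants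

namespace IsDimensionProfile

variable {K L : Type u} [Field K] [Field L] {A B : Type u} [Ring A] [Algebra K A]
  [HasDerivedCategory (ModuleCat.{u} A)] [Ring B] [Algebra L B]
  [HasDerivedCategory (ModuleCat.{u} B)]
  {F : DerivedCategory (ModuleCat.{u} A) ⥤ DerivedCategory (ModuleCat.{u} B)} {C : ℤ →₀ ℕ}
  (hC : IsDimensionProfile K L F C) {X : DerivedCategory (ModuleCat.{u} A)} (hX : InDb K A X)
include hC hX

lemma finCoh_obj : FinCoh L B (F.obj X) := fun n =>
  have h := Module.length_ne_top_iff.1 (ne_top_of_le_ne_top (ENat.natCast_ne_top _) (hC X hX n))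
  have := (isFiniteLength_iff_isNoetherian_isArtinian.1 h).1
  inferInstance

lemma hdim_obj_le (n : ℤ) :
    hdim L B n (F.obj X) ≤ C.sum fun i c => c * hdim K A (n + i) X := by
  have := hC.finCoh_obj hX n
  have h := hC X hX n
  rw [Module.length_eq_finrank] at h
  exact_mod_cast h

lemma exists_not_isZero {n : ℤ} (hn : ¬ IsZero (Hobj B n (F.obj X))) :
    ∃ i ∈ C.support, ¬ IsZero (Hobj A (n + i) X) := by
  by_contra! h
  refine hn (isZero_of_hdim_eq_zero (hC.finCoh_obj hX) (Nat.le_zero.1 ?_))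
  refine (hC.hdim_obj_le hX n).trans_eq (Finset.sum_eq_zero fun i hi => ?_)
  dsimp only
  rw [hdim_eq_zero_of_isZero (h i hi), mul_zero]

lemma hl_obj_le : hl L B (F.obj X) ≤ (C.sum fun _ c => c) * hl K A X := by
  refine csSup_le' ?_
  rintro _ ⟨n, rfl⟩
  refine (hC.hdim_obj_le hX n).trans ?_
  rw [Finsupp.sum_mul]
  exact Finset.sum_le_sum fun i _ => Nat.mul_le_mul_left _ (hdim_le_hl hX.1 _)

lemma bdd_obj : Bdd B (F.obj X) := by
  obtain ⟨a, b, hab⟩ := hX.1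
  let s := C.support.sup Int.natAbs
  refine ⟨a - s, b + s, fun n hn => ?_⟩
  by_contra h
  obtain ⟨i, hi, hi'⟩ := hC.exists_not_isZero hX h
  have his : i.natAbs ≤ s := Finset.le_sup hi
  have := mt (hab _) hi'
  lia

lemma hw_obj_le : hw B (F.obj X) ≤ hw A X + 2 * C.support.sup Int.natAbs := by
  refine csSup_le' ?_
  rintro n ⟨i, j, hi, hj, hn⟩
  obtain ⟨i', hi', hXi⟩ := hC.exists_not_isZero hX hi
  obtain ⟨j', hj', hXj⟩ := hC.exists_not_isZero hX hj
  have hi'' : i'.natAbs ≤ C.support.sup Int.natAbs := Finset.le_sup hi'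
  have hj'' : j'.natAbs ≤ C.support.sup Int.natAbs := Finset.le_sup hj'
  have := le_hw hX.1 hXi hXj
  lia

end IsDimensionProfile

section GlobalInvariants

variable {K L : Type u} [Field K] [Field L] {A B : Type u} [Ring A] [Algebra K A]
  [HasDerivedCategory (ModuleCat.{u} A)] [Ring B] [Algebra L B]
  [HasDerivedCategory (ModuleCat.{u} B)]

lemma hr_le_mul_hr {c : ℕ} {X : DerivedCategory (ModuleCat.{u} A)}
    {Y : DerivedCategory (ModuleCat.{u} B)} (hY : 1 ≤ hw B Y)
    (hl_le : hl K A X ≤ c * hl L B Y) (hw_le : hw A X ≤ hw B Y + c) :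
    hr K A X ≤ (1 + c) * c * hr L B Y :=
  calc hw A X * hl K A X
    _ ≤ (hw B Y + c * hw B Y) * (c * hl L B Y) :=
      Nat.mul_le_mul (hw_le.trans (by gcongr; exact Nat.le_mul_of_pos_right c hY)) hl_le
    _ = (1 + c) * c * (hw B Y * hl L B Y) := by ring

variable [FiniteDimensional K A] [FiniteDimensional L B]

variable (K L) in
theorem exists_hl_hw_obj_le
    (F : DerivedCategory (ModuleCat.{u} A) ⥤ DerivedCategory (ModuleCat.{u} B))
    [F.CommShift ℤ] [F.IsTriangulated] [F.IsEquivalence] :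
    ∃ c : ℕ, ∀ X, InDb K A X →
      InDb L B (F.obj X) ∧ hl L B (F.obj X) ≤ c * hl K A X ∧ hw B (F.obj X) ≤ hw A X + c := by
  obtain ⟨C, hC⟩ := exists_isDimensionProfile K L F
  refine ⟨max (C.sum fun _ c => c) (2 * C.support.sup Int.natAbs), fun X hX => ⟨⟨hC.bdd_obj hX,
    hC.finCoh_obj hX⟩, (hC.hl_obj_le hX).trans ?_, (hC.hw_obj_le hX).trans ?_⟩⟩
  · gcongr
    exact le_max_left _ _
  · gcongr
    exact le_max_right _ _

variable (K L) (F : DerivedCategory (ModuleCat.{u} A) ⥤ DerivedCategory (ModuleCat.{u} B))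
  (G : DerivedCategory (ModuleCat.{u} B) ⥤ DerivedCategory (ModuleCat.{u} A))
  [F.CommShift ℤ] [F.IsTriangulated] [F.IsEquivalence]
  [G.CommShift ℤ] [G.IsTriangulated] [G.IsEquivalence] (e : 𝟭 _ ≅ F ⋙ G)
include e

theorem exists_hl_hw_le_obj_of_iso_comp :
    ∃ c : ℕ, ∀ X, Indec X ∧ InDb K A X → (Indec (F.obj X) ∧ InDb L B (F.obj X)) ∧
      hl K A X ≤ c * hl L B (F.obj X) ∧ hw A X ≤ hw B (F.obj X) + c := by
  obtain ⟨_, hF⟩ := exists_hl_hw_obj_le K L F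
  obtain ⟨c, hG⟩ := exists_hl_hw_obj_le L K G
  refine ⟨c, fun X hX => ⟨⟨hX.1.map F, (hF X hX.2).1⟩, ?_⟩⟩
  let e' : X ≅ G.obj (F.obj X) := e.app X
  rw [hl_congr e', hw_congr e']
  exact (hG _ (hF X hX.2).1).2

theorem exists_glhr_glhl_glhw_le_of_iso_comp :
    ∃ c d : ℕ, glhr K A ≤ d * glhr L B ∧ glhl K A ≤ c * glhl L B ∧
      glhw K A ≤ glhw L B + c := by
  obtain ⟨c, hc⟩ := exists_hl_hw_le_obj_of_iso_comp K L F G e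
  refine ⟨c, (1 + c) * c, iSup_le fun ⟨X, hX⟩ => ?_, iSup_le fun ⟨X, hX⟩ => ?_,
    iSup_le fun ⟨X, hX⟩ => ?_⟩ <;> obtain ⟨hY, hl_le, hw_le⟩ := hc X hX
  · calc (hr K A X : ℕ∞)
      _ ≤ ((1 + c) * c : ℕ) * hr L B (F.obj X) := by
        exact_mod_cast hr_le_mul_hr (hY.1.one_le_hw hY.2.1) hl_le hw_le
      _ ≤ ((1 + c) * c : ℕ) * glhr L B := mul_le_mul_right (hr_le_glhr hY) _
  · calc (hl K A X : ℕ∞)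
      _ ≤ c * hl L B (F.obj X) := by exact_mod_cast hl_le
      _ ≤ c * glhl L B := mul_le_mul_right (hl_le_glhl hY) _
  · calc (hw A X : ℕ∞)
      _ ≤ hw B (F.obj X) + c := by exact_mod_cast hw_le
      _ ≤ glhw L B + c := add_le_add_left (hw_le_glhw hY) _

theorem glhr_glhl_glhw_lt_top_of_iso_comp :
    (glhr L B < ⊤ → glhr K A < ⊤) ∧ (glhl L B < ⊤ → glhl K A < ⊤) ∧
    (glhw L B < ⊤ → glhw K A < ⊤) := by
  obtain ⟨c, d, hr_le, hl_le, hw_le⟩ := exists_glhr_glhl_glhw_le_of_iso_comp K L F G e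
  exact ⟨fun h => hr_le.trans_lt (WithTop.mul_lt_top (ENat.natCast_lt_top d) h),
    fun h => hl_le.trans_lt (WithTop.mul_lt_top (ENat.natCast_lt_top c) h),
    fun h => hw_le.trans_lt (ENat.add_lt_top.2 ⟨h, ENat.natCast_lt_top c⟩)⟩

end GlobalInvariants

theorem glhr_glhl_glhw_finite_iff_of_derived_equivalence_general
    {K L : Type u} [Field K] [Field L]
    {A : Type u} [Ring A] [Algebra K A] [FiniteDimensional K A]
    [HasDerivedCategory.{u} (ModuleCat.{u} A)]
    {B : Type u} [Ring B] [Algebra L B] [FiniteDimensional L B]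
    [HasDerivedCategory.{u} (ModuleCat.{u} B)]
    (F : DerivedCategory (ModuleCat.{u} A) ⥤ DerivedCategory (ModuleCat.{u} B))
    [F.CommShift ℤ] [F.IsTriangulated] [F.IsEquivalence] :
    (glhr K A < ⊤ ↔ glhr L B < ⊤) ∧
    (glhl K A < ⊤ ↔ glhl L B < ⊤) ∧
    (glhw K A < ⊤ ↔ glhw L B < ⊤) := by
  let E := F.asEquivalence
  let : E.functor.CommShift ℤ := ‹F.CommShift ℤ›
  have : E.functor.IsTriangulated := ‹F.IsTriangulated›
  let : E.inverse.CommShift ℤ := E.commShiftInverse ℤ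
  have : E.CommShift ℤ := E.commShift_of_functor ℤ
  have : E.inverse.IsTriangulated := E.toAdjunction.isTriangulated_rightAdjoint
  have hA := glhr_glhl_glhw_lt_top_of_iso_comp K L E.functor E.inverse E.unitIso
  have hB := glhr_glhl_glhw_lt_top_of_iso_comp L K E.inverse E.functor E.counitIso.symm
  exact ⟨⟨hB.1, hA.1⟩, ⟨hB.2.1, hA.2.1⟩, ⟨hB.2.2, hA.2.2⟩⟩

theorem glhr_glhl_glhw_finite_iff_of_derived_equivalence
    (A : Type u) [Ring A] [Algebra k A] [FiniteDimensional k A]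
    [HasDerivedCategory.{u} (ModuleCat.{u} A)]
    (B : Type u) [Ring B] [Algebra k B] [FiniteDimensional k B]
    [HasDerivedCategory.{u} (ModuleCat.{u} B)]
    (F : DerivedCategory (ModuleCat.{u} A) ⥤ DerivedCategory (ModuleCat.{u} B))
    [F.CommShift ℤ] [F.IsTriangulated] [F.IsEquivalence] :
    (glhr k A < ⊤ ↔ glhr k B < ⊤) ∧
    (glhl k A < ⊤ ↔ glhl k B < ⊤) ∧
    (glhw k A < ⊤ ↔ glhw k B < ⊤) :=
  glhr_glhl_glhw_finite_iff_of_derived_equivalence_general F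
end
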